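/- For every ε > 0 there exists a constant C > 0 such that for all sufficiently large N, the Gauss measure of the set {x ∈ (0,1) : |S_N(x)/(N (log N)^2) − 1/(2 log 2)| > ε} is at most C/(ε log N). (Quantitative rate in the weak law of large numbers.) -/

import Mathlib

/-!
The products `a_i a_{i+1}` have tail `μ(a₁ a₂ > M) ≍ log M / M`, hence infinite mean, and the law of
large numbers is obtained by truncating them at a level `M` comparable to `N log² N`.

* By invariance of `μ` and `tail_bound`, some product among the first `N` exceeds `M` with
  probability at most `2 N (2 + log M) / M = O(1 / log N)`. Off that event `S N` equals the Birkhoff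
  sum `Y M N` of the truncated product `Xt M`.
* The mean `m1 M` of `Xt M` satisfies `m1 M * log 2 = (log M)² / 2 + O(log M)` (`m1_asymp`): the
  cylinder `a₁ = a, a₂ = b` has measure about `1 / (a² b² log 2)`, and the sum of `1 / (a b)` over
  `a b ≤ M` is `(log M)² / 2 + O(log M)`. As `log M = log N + O(log log N)`, the centering `N m1 M`
  is `N log² N / (2 log 2)` up to a relative error tending to `0`.
* The variance of `Y M N` is at most `3 N KK M` with `KK M = 2 m2 M + 48 (m1 M)²`
  (`integral_Y_sq`), and `m2 M = O(M log M) = O(N log³ N)` because `a b ≤ M` has `O(M log M)`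
  solutions. Chebyshev's inequality at scale `ε N log² N` gives probability `O(1 / (ε² log N))`.

Linear growth of the variance rests on exponential mixing for the Gauss map (`mixing`), which comes
from the transfer operator `U f (x) = ∑ i, wt i x * f (br i x)` dual to composition with the Gauss
map (`duality`). It sends antitone functions on `[0, 1]` to monotone ones (`UR_monotone`) and halves
their oscillation (`UR_osc`). Two applications turn the indicator of a rank-two cylinder into an
explicit function, a difference of two antitone functions whose oscillations are bounded by a fixed
multiple of the measure of the cylinder; further applications bring it exponentially close to that
measure, uniformly on `(0, 1)`.
-/

open MeasureTheory Filter Real Set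

/-- The Gauss map `T(x) = 1/x - ⌊1/x⌋`, with `T(0) = 0`. -/
noncomputable def gaussMap (x : ℝ) : ℝ := if x = 0 then 0 else 1 / x - ⌊1 / x⌋

/-- The `n`-th partial quotient `a_n(x) = ⌊1 / T^{n-1}(x)⌋` (for `n ≥ 1`). -/
noncomputable def pq (n : ℕ) (x : ℝ) : ℕ := ⌊1 / (gaussMap^[n - 1] x)⌋₊

/-- `S_n(x) = ∑_{i=1}^n a_i(x) a_{i+1}(x)`. -/
noncomputable def S (n : ℕ) (x : ℝ) : ℕ := ∑ i ∈ Finset.Icc 1 n, pq i x * pq (i + 1) x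

/-- The Gauss measure `μ(A) = (1/log 2) ∫_A dx/(1+x)` on `(0,1)`. -/
noncomputable def gaussMeasure : Measure ℝ :=
  (volume.restrict (Set.Ioo (0:ℝ) 1)).withDensity
    (fun x => ENNReal.ofReal (1 / (Real.log 2 * (1 + x))))

/-! ### Transfer operator of the Gauss map -/

/-- The inverse branches `y ↦ 1 / (i + 1 + y)` of the Gauss map, indexed from `0`. -/
noncomputable def br (i : ℕ) (x : ℝ) : ℝ := 1 / (i + 1 + x)

/-- The weight of the `i`-th branch in the transfer operator with respect to the Gauss measure. -/
noncomputable def wt (i : ℕ) (x : ℝ) : ℝ := (1 + x) / ((i + 1 + x) * (i + 2 + x))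

/-- The transfer operator of the Gauss map with respect to the Gauss measure, on
`[0, ∞]`-valued functions. -/
noncomputable def UE (F : ℝ → ENNReal) (x : ℝ) : ENNReal :=
  ∑' i : ℕ, ENNReal.ofReal (wt i x) * F (br i x)

/-- The same transfer operator on real functions; it is used only for functions that are bounded
on `[0, 1]`, where the series converges. -/
noncomputable def UR (f : ℝ → ℝ) (x : ℝ) : ℝ := ∑' i : ℕ, wt i x * f (br i x)

lemma measurable_gaussMap : Measurable gaussMap := by
  unfold gaussMap
  refine Measurable.ite (measurableSet_singleton 0) measurable_const ?_
  have : Measurable fun x : ℝ => 1 / x := by fun_prop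
  exact this.sub (measurable_from_top.comp (Int.measurable_floor.comp this))

lemma measurable_br (i : ℕ) : Measurable (br i) := by unfold br; fun_prop

lemma measurable_wt (i : ℕ) : Measurable (wt i) := by unfold wt; fun_prop

lemma measurable_UE {F : ℝ → ENNReal} (hF : Measurable F) : Measurable (UE F) := by
  unfold UE
  refine Measurable.tsum fun i => ?_
  exact (measurable_wt i).ennreal_ofReal.mul (hF.comp (measurable_br i))

lemma measurable_pq (n : ℕ) : Measurable (pq n) := by
  unfold pq
  have h : Measurable (gaussMap^[n - 1]) := measurable_gaussMap.iterate _
  exact Nat.measurable_floor.comp (h.const_div 1)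

lemma br_mem_Ioo (i : ℕ) {x : ℝ} (hx : x ∈ Ioo (0 : ℝ) 1) : br i x ∈ Ioo (0 : ℝ) 1 := by
  have hi : (0 : ℝ) ≤ i := Nat.cast_nonneg i
  have := hx.1
  refine ⟨by unfold br; positivity, ?_⟩
  unfold br
  rw [div_lt_one (by positivity)]
  linarith

lemma br_mem_Icc (i : ℕ) {x : ℝ} (hx : x ∈ Icc (0 : ℝ) 1) : br i x ∈ Icc (0 : ℝ) 1 := by
  have hi : (0 : ℝ) ≤ i := Nat.cast_nonneg i
  have := hx.1
  refine ⟨by unfold br; positivity, ?_⟩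
  unfold br
  rw [div_le_one (by positivity)]
  linarith

lemma floor_br (i : ℕ) {x : ℝ} (hx : x ∈ Ioo (0 : ℝ) 1) : ⌊1 / br i x⌋₊ = i + 1 := by
  have hi : (0 : ℝ) ≤ i := Nat.cast_nonneg i
  have h0 := hx.1
  have h1 := hx.2
  have : 1 / br i x = i + 1 + x := by unfold br; field_simp
  rw [this, Nat.floor_eq_iff (by positivity)]
  push_cast
  constructor <;> linarith

lemma gaussMap_br (i : ℕ) {x : ℝ} (hx : x ∈ Ioo (0 : ℝ) 1) : gaussMap (br i x) = x := by
  have hi : (0 : ℝ) ≤ i := Nat.cast_nonneg i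
  have h0 := hx.1
  have h1 := hx.2
  have hb := br_mem_Ioo i hx
  have : 1 / br i x = i + 1 + x := by unfold br; field_simp
  unfold gaussMap
  rw [if_neg hb.1.ne', this]
  have : ⌊(i + 1 + x : ℝ)⌋ = (i : ℤ) + 1 := by
    rw [Int.floor_eq_iff]; push_cast; constructor <;> linarith
  rw [this]; push_cast; ring

lemma wt_nonneg (i : ℕ) {x : ℝ} (hx : 0 ≤ x) : 0 ≤ wt i x := by
  unfold wt; positivity

/-- The density of the Gauss measure. -/
noncomputable def dens (x : ℝ) : ENNReal := ENNReal.ofReal (1 / (Real.log 2 * (1 + x)))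

lemma measurable_dens : Measurable dens := by unfold dens; fun_prop

lemma lintegral_gauss {F : ℝ → ENNReal} (hF : Measurable F) :
    ∫⁻ x, F x ∂gaussMeasure = ∫⁻ x in Ioo (0 : ℝ) 1, dens x * F x := by
  exact lintegral_withDensity_eq_lintegral_mul _ measurable_dens hF

/-- Up to a countable set the images of the inverse branches partition the unit interval. -/
lemma iUnion_br_ae : (⋃ i : ℕ, br i '' Ioo (0 : ℝ) 1) =ᵐ[volume] Ioo (0 : ℝ) 1 := by
  have hsub : (⋃ i : ℕ, br i '' Ioo (0 : ℝ) 1) ⊆ Ioo (0 : ℝ) 1 := by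
    refine iUnion_subset fun i => ?_
    rintro _ ⟨x, hx, rfl⟩
    exact br_mem_Ioo i hx
  have hsup : Ioo (0 : ℝ) 1 \ (range fun n : ℕ => 1 / (n : ℝ)) ⊆
      ⋃ i : ℕ, br i '' Ioo (0 : ℝ) 1 := by
    rintro x ⟨hx, hr⟩
    have h1 : 1 ≤ 1 / x := by rw [le_div_iff₀ hx.1]; linarith [hx.2]
    have hf : 1 ≤ ⌊1 / x⌋₊ := by rw [Nat.one_le_floor_iff]; exact h1
    obtain ⟨i, hi⟩ := Nat.exists_eq_add_of_le' hf
    have hle : (⌊1 / x⌋₊ : ℝ) ≤ 1 / x := Nat.floor_le (by positivity)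
    have hlt : 1 / x < (⌊1 / x⌋₊ : ℝ) + 1 := Nat.lt_floor_add_one _
    have hne : (⌊1 / x⌋₊ : ℝ) ≠ 1 / x := by
      intro h
      exact hr ⟨⌊1 / x⌋₊, by simp only [h]; simp⟩
    rw [hi] at hle hlt hne
    push_cast at hle hlt hne
    refine mem_iUnion.2 ⟨i, 1 / x - (i + 1), ⟨?_, ?_⟩, ?_⟩
    · have := lt_of_le_of_ne hle hne; linarith
    · linarith
    · unfold br; simp
  refine Filter.EventuallyLE.antisymm (ae_of_all _ hsub) ?_
  have hnull : volume (range fun n : ℕ => 1 / (n : ℝ)) = 0 := (countable_range _).measure_zero _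
  filter_upwards [measure_eq_zero_iff_ae_notMem.1 hnull] with x hx hx1
  exact hsup ⟨hx1, hx⟩

lemma disjoint_br : Pairwise (Function.onFun Disjoint fun i : ℕ => br i '' Ioo (0 : ℝ) 1) := by
  intro i j hij
  rw [Function.onFun, Set.disjoint_left]
  rintro _ ⟨x, hx, rfl⟩ ⟨y, hy, h⟩
  have h1 := floor_br i hx
  rw [← h, floor_br j hy] at h1
  omega

lemma injOn_br (i : ℕ) : InjOn (br i) (Ioo (0 : ℝ) 1) := fun x hx y hy h => by
  rw [← gaussMap_br i hx, ← gaussMap_br i hy, h]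

lemma hasDeriv_br (i : ℕ) {x : ℝ} (hx : x ∈ Ioo (0 : ℝ) 1) :
    HasDerivWithinAt (br i) (-(1 / (i + 1 + x) ^ 2)) (Ioo (0 : ℝ) 1) x := by
  have h0 := hx.1
  have hne : ((i : ℝ) + 1 + x) ≠ 0 := by positivity
  have h : HasDerivAt (fun x : ℝ => (i : ℝ) + 1 + x) 1 x := by
    simpa using (hasDerivAt_id x).const_add ((i : ℝ) + 1)
  have e : br i = (fun x : ℝ => (i : ℝ) + 1 + x)⁻¹ := by ext; simp [br]
  rw [e, ← neg_div]
  exact (h.inv hne).hasDerivWithinAt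

lemma measurableSet_image_br (i : ℕ) : MeasurableSet (br i '' Ioo (0 : ℝ) 1) :=
  measurableSet_Ioo.image_of_continuousOn_injOn
    (fun _ hx => (hasDeriv_br i hx).continuousWithinAt) (injOn_br i)

/-- Duality between composition with the Gauss map and the transfer operator. -/
lemma duality {F G : ℝ → ENNReal} (hF : Measurable F) (hG : Measurable G) :
    ∫⁻ x, F x * G (gaussMap x) ∂gaussMeasure = ∫⁻ x, UE F x * G x ∂gaussMeasure := by
  have hm : Measurable fun x => F x * G (gaussMap x) := hF.mul (hG.comp measurable_gaussMap)
  have hm' : Measurable fun x => UE F x * G x := (measurable_UE hF).mul hG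
  rw [lintegral_gauss hm, lintegral_gauss hm', ← setLIntegral_congr iUnion_br_ae,
    lintegral_iUnion measurableSet_image_br disjoint_br]
  have key : ∀ i : ℕ, ∫⁻ x in br i '' Ioo (0 : ℝ) 1, dens x * (F x * G (gaussMap x)) =
      ∫⁻ x in Ioo (0 : ℝ) 1, dens x * (ENNReal.ofReal (wt i x) * F (br i x) * G x) := by
    intro i
    rw [lintegral_image_eq_lintegral_abs_deriv_mul measurableSet_Ioo
      (fun x hx => hasDeriv_br i hx) (injOn_br i)]
    refine setLIntegral_congr_fun measurableSet_Ioo fun x hx => ?_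
    have h0 := hx.1
    have hl : 0 < Real.log 2 := Real.log_pos (by norm_num)
    simp only [gaussMap_br i hx]
    have : ENNReal.ofReal |(-(1 / ((i : ℝ) + 1 + x) ^ 2))| * dens (br i x) =
        dens x * ENNReal.ofReal (wt i x) := by
      unfold dens
      rw [← ENNReal.ofReal_mul (abs_nonneg _), ← ENNReal.ofReal_mul (by positivity)]
      congr 1
      rw [abs_neg, abs_of_nonneg (by positivity)]
      unfold br wt
      have h2 : ((i : ℝ) + 1 + x) ≠ 0 := by positivity
      have h3 : ((i : ℝ) + 2 + x) ≠ 0 := by positivity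
      have h4 : (1 + 1 / ((i : ℝ) + 1 + x)) ≠ 0 := by positivity
      have h5 : (1 + x) ≠ 0 := by positivity
      have h6 : (1 + 1 / ((i : ℝ) + 1 + x)) = (i + 2 + x) / (i + 1 + x) := by
        field_simp; ring
      rw [h6]
      field_simp
    rw [← mul_assoc, this]
    ring
  simp_rw [key]
  rw [← lintegral_tsum]
  · refine setLIntegral_congr_fun measurableSet_Ioo fun x _ => ?_
    simp only [UE]
    rw [ENNReal.tsum_mul_left, ENNReal.tsum_mul_right]
  · intro i
    exact (measurable_dens.mul ((((measurable_wt i).ennreal_ofReal).mul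
      (hF.comp (measurable_br i))).mul hG)).aemeasurable

/-! ### Contraction of the oscillation of monotone functions -/

/-- The tail `∑_{j ≥ i} wt j x` of the branch weights. -/
noncomputable def wtTail (i : ℕ) (x : ℝ) : ℝ := (1 + x) / (i + 1 + x)

lemma wt_eq_sub (i : ℕ) {x : ℝ} (hx : 0 ≤ x) : wt i x = wtTail i x - wtTail (i + 1) x := by
  unfold wt wtTail
  push_cast
  have h1 : (i : ℝ) + 1 + x ≠ 0 := by positivity
  have h2 : (i : ℝ) + 2 + x ≠ 0 := by positivity
  have h3 : (i : ℝ) + 1 + 1 + x ≠ 0 := by positivity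
  field_simp
  ring

lemma tendsto_wtTail (x : ℝ) : Tendsto (fun n => wtTail n x) atTop (nhds 0) := by
  unfold wtTail
  refine Tendsto.const_div_atTop ?_ _
  refine tendsto_atTop_add_const_right _ _ (tendsto_atTop_add_const_right _ _ ?_)
  exact tendsto_natCast_atTop_atTop

lemma hasSum_wt {x : ℝ} (hx : 0 ≤ x) : HasSum (fun i => wt i x) 1 := by
  rw [hasSum_iff_tendsto_nat_of_nonneg fun i => wt_nonneg i hx]
  have h : ∀ n, ∑ i ∈ Finset.range n, wt i x = 1 - wtTail n x := by
    intro n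
    rw [Finset.sum_congr rfl fun i _ => wt_eq_sub i hx,
      Finset.sum_range_sub' (fun i => wtTail i x) n]
    congr 1
    unfold wtTail
    have : 1 + x ≠ 0 := by positivity
    simp [this]
  simp_rw [h]
  simpa using (tendsto_wtTail x).const_sub 1

lemma summable_UR {f : ℝ → ℝ} {K : ℝ} (hf : ∀ x ∈ Icc (0 : ℝ) 1, |f x| ≤ K) {x y : ℝ}
    (hx : x ∈ Icc (0 : ℝ) 1) (hy : y ∈ Icc (0 : ℝ) 1) :
    Summable fun i => wt i x * f (br i y) := by
  refine Summable.of_norm_bounded ((hasSum_wt hx.1).summable.mul_right K) fun i => ?_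
  rw [norm_mul, Real.norm_eq_abs, Real.norm_eq_abs, abs_of_nonneg (wt_nonneg i hx.1)]
  exact mul_le_mul_of_nonneg_left (hf _ (br_mem_Icc i hy)) (wt_nonneg i hx.1)

lemma bdd_of_antitone {f : ℝ → ℝ} (hf : AntitoneOn f (Icc 0 1)) :
    ∀ x ∈ Icc (0 : ℝ) 1, |f x| ≤ |f 0| + |f 1| := by
  intro x hx
  have h0 : f x ≤ f 0 := hf (by simp) hx hx.1
  have h1 : f 1 ≤ f x := hf hx (by simp) hx.2
  rw [abs_le]
  constructor
  · linarith [neg_abs_le (f 1), abs_nonneg (f 0)]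
  · linarith [le_abs_self (f 0), abs_nonneg (f 1)]

lemma br_anti (i : ℕ) {x y : ℝ} (hx : 0 ≤ x) (hxy : x ≤ y) : br i y ≤ br i x := by
  unfold br
  have hi : (0 : ℝ) ≤ i := Nat.cast_nonneg i
  exact one_div_le_one_div_of_le (by positivity) (by linarith)

lemma br_succ_le (i : ℕ) {x : ℝ} (hx : 0 ≤ x) : br (i + 1) x ≤ br i x := by
  unfold br
  push_cast
  exact one_div_le_one_div_of_le (by positivity) (by linarith)

lemma wtTail_mono (i : ℕ) {x y : ℝ} (hx : 0 ≤ x) (hxy : x ≤ y) : wtTail i x ≤ wtTail i y := by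
  unfold wtTail
  have hi : (0 : ℝ) ≤ i := Nat.cast_nonneg i
  have hy : 0 ≤ y := hx.trans hxy
  rw [div_le_div_iff₀ (by positivity) (by positivity)]
  nlinarith [mul_nonneg hi (sub_nonneg.2 hxy)]

/-- The transfer operator reverses monotonicity: as `x` grows, the branch index gets stochastically
larger and each branch decreases. -/
lemma UR_monotone {f : ℝ → ℝ} (hf : AntitoneOn f (Icc 0 1)) : MonotoneOn (UR f) (Icc 0 1) := by
  intro x hx y hy hxy
  have hb := bdd_of_antitone hf
  set K := |f 0| + |f 1| with hK
  have s1 := summable_UR hb hx hx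
  have s2 := summable_UR hb hx hy
  have s3 := summable_UR hb hy hy
  have step1 : UR f x ≤ ∑' i, wt i x * f (br i y) := by
    refine s1.tsum_le_tsum (fun i => ?_) s2
    exact mul_le_mul_of_nonneg_left
      (hf (br_mem_Icc i hy) (br_mem_Icc i hx) (br_anti i hx.1 hxy)) (wt_nonneg i hx.1)
  refine step1.trans ?_
  -- Abel summation against the nondecreasing sequence `f (br n y)`
  have part : ∀ n, -((wtTail n y - wtTail n x) * f (br n y)) ≤
      ∑ i ∈ Finset.range n, (wt i y * f (br i y) - wt i x * f (br i y)) := by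
    intro n
    induction n with
    | zero =>
      have h1 : (1 + x) ≠ 0 := by linarith [hx.1]
      have h2 : (1 + y) ≠ 0 := by linarith [hy.1]
      simp [wtTail, h1, h2]
    | succ n ih =>
      rw [Finset.sum_range_succ, wt_eq_sub n hx.1, wt_eq_sub n hy.1]
      have hc : f (br n y) ≤ f (br (n + 1) y) :=
        hf (br_mem_Icc _ hy) (br_mem_Icc _ hy) (br_succ_le n hy.1)
      have hD : 0 ≤ wtTail (n + 1) y - wtTail (n + 1) x :=
        sub_nonneg.2 (wtTail_mono (n + 1) hx.1 hxy)
      nlinarith [mul_nonneg hD (sub_nonneg.2 hc)]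
  have part' : ∀ n, -((wtTail n y - wtTail n x) * K) ≤
      ∑ i ∈ Finset.range n, (wt i y * f (br i y) - wt i x * f (br i y)) := by
    intro n
    refine le_trans ?_ (part n)
    have hD : 0 ≤ wtTail n y - wtTail n x := sub_nonneg.2 (wtTail_mono n hx.1 hxy)
    have := (abs_le.1 (hb _ (br_mem_Icc n hy))).2
    nlinarith
  have lim1 := (s3.sub s2).hasSum.tendsto_sum_nat
  have lim2 : Tendsto (fun n => -((wtTail n y - wtTail n x) * K)) atTop (nhds 0) := by
    simpa using (((tendsto_wtTail y).sub (tendsto_wtTail x)).mul_const K).neg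
  have := le_of_tendsto_of_tendsto' lim2 lim1 part'
  rw [s3.tsum_sub s2] at this
  unfold UR
  linarith

/-- The transfer operator halves the oscillation of monotone functions. -/
lemma UR_osc {f : ℝ → ℝ} (hf : AntitoneOn f (Icc 0 1)) :
    UR f 1 - UR f 0 ≤ (f 0 - f 1) / 2 := by
  have hb := bdd_of_antitone hf
  have h0 : (0 : ℝ) ∈ Icc (0 : ℝ) 1 := by simp
  have h1 : (1 : ℝ) ∈ Icc (0 : ℝ) 1 := by simp
  have s0 := summable_UR hb h0 h0
  have s0' := (summable_nat_add_iff 1).2 s0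
  have e1 : UR f 1 = 2 * ∑' i, wt (i + 1) 0 * f (br (i + 1) 0) := by
    unfold UR
    rw [← tsum_mul_left]
    refine tsum_congr fun i => ?_
    have : br i 1 = br (i + 1) 0 := by unfold br; push_cast; ring_nf
    rw [this, ← mul_assoc]
    congr 1
    unfold wt
    push_cast
    ring_nf
  have e0 : UR f 0 = 1 / 2 * f 1 + ∑' i, wt (i + 1) 0 * f (br (i + 1) 0) := by
    unfold UR
    rw [s0.tsum_eq_zero_add]
    simp [wt, br]
  have w := hasSum_wt (le_refl (0 : ℝ))
  have w' : ∑' i, wt (i + 1) 0 = 1 / 2 := by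
    have := w.summable.tsum_eq_zero_add
    rw [w.tsum_eq] at this
    have h : wt 0 0 = 1 / 2 := by simp [wt]
    linarith
  have hle : ∑' i, wt (i + 1) 0 * f (br (i + 1) 0) ≤ 1 / 2 * f 0 := by
    rw [← w', ← tsum_mul_right]
    refine s0'.tsum_le_tsum (fun i => ?_) (((summable_nat_add_iff 1).2 w.summable).mul_right _)
    exact mul_le_mul_of_nonneg_left (hf h0 (br_mem_Icc _ h0) (br_mem_Icc _ h0).1)
      (wt_nonneg _ le_rfl)
  linarith

/-- `Osc δ w`: on `[0, 1]` the function `w` is nonnegative and is a difference of two antitone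
functions of total oscillation at most `δ`. -/
def Osc (δ : ℝ) (w : ℝ → ℝ) : Prop :=
  (∀ x ∈ Icc (0 : ℝ) 1, 0 ≤ w x) ∧ ∃ f g : ℝ → ℝ, AntitoneOn f (Icc 0 1) ∧
    AntitoneOn g (Icc 0 1) ∧ (∀ x ∈ Icc (0 : ℝ) 1, w x = f x - g x) ∧
    (f 0 - f 1) + (g 0 - g 1) ≤ δ

lemma Osc.bdd {δ : ℝ} {w : ℝ → ℝ} (h : Osc δ w) :
    ∃ K, ∀ x ∈ Icc (0 : ℝ) 1, |w x| ≤ K := by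
  obtain ⟨-, f, g, hf, hg, hw, -⟩ := h
  refine ⟨(|f 0| + |f 1|) + (|g 0| + |g 1|), fun x hx => ?_⟩
  rw [hw x hx]
  exact (abs_sub _ _).trans (add_le_add (bdd_of_antitone hf x hx) (bdd_of_antitone hg x hx))

lemma Osc.step {δ : ℝ} {w : ℝ → ℝ} (h : Osc δ w) : Osc (δ / 2) (UR w) := by
  obtain ⟨h0, f, g, hf, hg, hw, hδ⟩ := h
  refine ⟨fun x hx => tsum_nonneg fun i =>
    mul_nonneg (wt_nonneg i hx.1) (h0 _ (br_mem_Icc i hx)), fun x => -UR g x, fun x => -UR f x,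
    (UR_monotone hg).neg, (UR_monotone hf).neg, fun x hx => ?_, ?_⟩
  · have s1 := summable_UR (bdd_of_antitone hf) hx hx
    have s2 := summable_UR (bdd_of_antitone hg) hx hx
    have : UR w x = UR f x - UR g x := by
      unfold UR
      rw [← s1.tsum_sub s2]
      refine tsum_congr fun i => ?_
      rw [hw _ (br_mem_Icc i hx)]
      ring
    rw [this]; ring
  · linarith [UR_osc hf, UR_osc hg]

lemma Osc.iterate {δ : ℝ} {w : ℝ → ℝ} (h : Osc δ w) (n : ℕ) : Osc (δ / 2 ^ n) (UR^[n] w) := by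
  induction n with
  | zero => simpa using h
  | succ n ih =>
    rw [Function.iterate_succ_apply']
    convert ih.step using 1
    rw [pow_succ]; field_simp

lemma Osc.sub_le {δ : ℝ} {w : ℝ → ℝ} (h : Osc δ w) {x y : ℝ} (hx : x ∈ Icc (0 : ℝ) 1)
    (hy : y ∈ Icc (0 : ℝ) 1) : w x ≤ w y + δ := by
  obtain ⟨-, f, g, hf, hg, hw, hδ⟩ := h
  rw [hw x hx, hw y hy]
  have h0 : (0 : ℝ) ∈ Icc (0 : ℝ) 1 := by simp
  have h1 : (1 : ℝ) ∈ Icc (0 : ℝ) 1 := by simp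
  linarith [hf h0 hx hx.1, hf hy h1 hy.2, hg h0 hy hy.1, hg hx h1 hx.2]

lemma UE_congr {F G : ℝ → ENNReal} (h : ∀ x ∈ Ioo (0 : ℝ) 1, F x = G x) :
    ∀ x ∈ Ioo (0 : ℝ) 1, UE F x = UE G x := by
  intro x hx
  unfold UE
  refine tsum_congr fun i => ?_
  rw [h _ (br_mem_Ioo i hx)]

lemma UE_iterate_ofReal {δ : ℝ} {w : ℝ → ℝ} (h : Osc δ w) {F : ℝ → ENNReal}
    (hF : ∀ x ∈ Ioo (0 : ℝ) 1, F x = ENNReal.ofReal (w x)) (n : ℕ) :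
    ∀ x ∈ Ioo (0 : ℝ) 1, UE^[n] F x = ENNReal.ofReal (UR^[n] w x) := by
  induction n with
  | zero => simpa using hF
  | succ n ih =>
    intro x hx
    rw [Function.iterate_succ_apply', Function.iterate_succ_apply', UE_congr ih x hx]
    have hx' := Ioo_subset_Icc_self hx
    have ho := h.iterate n
    obtain ⟨K, hK⟩ := ho.bdd
    unfold UE UR
    rw [ENNReal.ofReal_tsum_of_nonneg]
    · refine tsum_congr fun i => ?_
      rw [ENNReal.ofReal_mul (wt_nonneg i hx'.1)]
    · exact fun i => mul_nonneg (wt_nonneg i hx'.1) (ho.1 _ (br_mem_Icc i hx'))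
    · exact summable_UR hK hx' hx'

lemma measurable_UE_iterate {F : ℝ → ENNReal} (hF : Measurable F) (n : ℕ) :
    Measurable (UE^[n] F) := by
  induction n with
  | zero => simpa using hF
  | succ n ih => rw [Function.iterate_succ']; exact measurable_UE ih

lemma duality_iterate {F G : ℝ → ENNReal} (hF : Measurable F) (hG : Measurable G) (n : ℕ) :
    ∫⁻ x, F x * G (gaussMap^[n] x) ∂gaussMeasure = ∫⁻ x, UE^[n] F x * G x ∂gaussMeasure := by
  induction n generalizing F with
  | zero => simp
  | succ n ih =>
    have := duality hF (hG.comp (measurable_gaussMap.iterate n))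
    simp only [Function.comp, ← Function.iterate_succ_apply] at this
    rw [this, ih (measurable_UE hF)]
    simp only [← Function.iterate_succ_apply]

/-! ### Invariance, rank-two cylinders and mixing -/

lemma ae_mem_Ioo : ∀ᵐ x ∂gaussMeasure, x ∈ Ioo (0 : ℝ) 1 := by
  have h : gaussMeasure ≪ volume.restrict (Ioo (0 : ℝ) 1) := withDensity_absolutelyContinuous _ _
  exact h.ae_le (ae_restrict_mem measurableSet_Ioo)

lemma log_two_pos : 0 < Real.log 2 := Real.log_pos (by norm_num)

instance isProbabilityMeasure_gauss : IsProbabilityMeasure gaussMeasure := by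
  constructor
  have h1 : gaussMeasure univ = ∫⁻ x in Ioo (0 : ℝ) 1, dens x := by
    rw [← lintegral_one, lintegral_gauss measurable_const]; simp
  have hlog := log_two_pos
  have hderiv : ∀ x ∈ uIcc (0 : ℝ) 1,
      HasDerivAt (fun x => Real.log (1 + x) / Real.log 2) (1 / (Real.log 2 * (1 + x))) x := by
    intro x hx
    rw [uIcc_of_le zero_le_one] at hx
    have h0 : (1 : ℝ) + x ≠ 0 := by linarith [hx.1]
    have := (((hasDerivAt_id x).const_add 1).log h0).div_const (Real.log 2)
    exact this.congr_deriv (by simp only [id]; field_simp)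
  have hcont : ContinuousOn (fun x : ℝ => 1 / (Real.log 2 * (1 + x))) (uIcc 0 1) := by
    rw [uIcc_of_le zero_le_one]
    refine continuousOn_const.div (by fun_prop) fun x hx => ?_
    have := hx.1
    positivity
  have hii := hcont.intervalIntegrable (μ := volume)
  have h2 := intervalIntegral.integral_eq_sub_of_hasDerivAt hderiv hii
  have h3 : ∫ x in (0 : ℝ)..1, 1 / (Real.log 2 * (1 + x)) = 1 := by
    rw [h2]; norm_num
  rw [intervalIntegral.integral_of_le zero_le_one, integral_Ioc_eq_integral_Ioo] at h3
  rw [h1]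
  unfold dens
  rw [← ofReal_integral_eq_lintegral_ofReal, h3, ENNReal.ofReal_one]
  · rw [intervalIntegrable_iff_integrableOn_Ioo_of_le zero_le_one] at hii
    exact hii
  · filter_upwards [ae_restrict_mem measurableSet_Ioo] with x hx
    have := hx.1
    simp only [Pi.zero_apply]
    positivity

/-- The Gauss measure is invariant under the Gauss map. -/
lemma measurePreserving_gauss : MeasurePreserving gaussMap gaussMeasure gaussMeasure := by
  refine ⟨measurable_gaussMap, ?_⟩
  refine Measure.ext_of_lintegral _ fun G hG => ?_
  rw [lintegral_map hG measurable_gaussMap]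
  have := duality (F := fun _ => 1) measurable_const hG
  simp only [one_mul] at this
  rw [this]
  refine lintegral_congr_ae ?_
  filter_upwards [ae_mem_Ioo] with x hx
  have h := hasSum_wt hx.1.le
  have : UE (fun _ => 1) x = 1 := by
    unfold UE
    simp only [mul_one]
    rw [← ENNReal.ofReal_tsum_of_nonneg (fun i => wt_nonneg i hx.1.le) h.summable, h.tsum_eq,
      ENNReal.ofReal_one]
  simp only [this, one_mul]

lemma measurePreserving_iterate (n : ℕ) :
    MeasurePreserving gaussMap^[n] gaussMeasure gaussMeasure :=
  measurePreserving_gauss.iterate n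

/-- The rank-two cylinder `a₁ = i + 1`, `a₂ = j + 1`. -/
def cyl (p : ℕ × ℕ) : Set ℝ := {x | pq 1 x = p.1 + 1 ∧ pq 2 x = p.2 + 1}

lemma measurableSet_cyl (p : ℕ × ℕ) : MeasurableSet (cyl p) :=
  (measurableSet_eq_fun (measurable_pq 1) measurable_const).inter
    (measurableSet_eq_fun (measurable_pq 2) measurable_const)

/-- The density, with respect to Lebesgue measure, of the image under the second iterate of the
Gauss map of the restriction to `cyl p` of the (unnormalised) Gauss measure. -/
noncomputable def kk (p : ℕ × ℕ) (x : ℝ) : ℝ :=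
  1 / (((p.1 + 1) * (p.2 + 1 + x) + 1) * ((p.1 + 2) * (p.2 + 1 + x) + 1))

/-- A rank-two cylinder meets exactly one of the inverse branches of order two, so the second
iterate of its indicator is a single explicit rational function. -/
lemma UE_two_cyl (p : ℕ × ℕ) : ∀ x ∈ Ioo (0 : ℝ) 1,
    UE^[2] ((cyl p).indicator 1) x = ENNReal.ofReal ((1 + x) * kk p x) := by
  obtain ⟨i, j⟩ := p
  intro x hx
  have h0 := hx.1
  have hmem : ∀ j' i' : ℕ, (cyl (i, j)).indicator (1 : ℝ → ENNReal) (br i' (br j' x)) =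
      if j' = j ∧ i' = i then 1 else 0 := by
    intro j' i'
    have hb := br_mem_Ioo j' hx
    have e : br i' (br j' x) ∈ cyl (i, j) ↔ j' = j ∧ i' = i := by
      unfold cyl pq
      simp only [mem_ofPred_eq, Nat.sub_self, Function.iterate_zero, id,
        show 2 - 1 = 1 from rfl, Function.iterate_one, gaussMap_br i' hb, floor_br i' hb,
        floor_br j' hx]
      omega
    by_cases h : j' = j ∧ i' = i
    · rw [if_pos h, indicator_of_mem (e.2 h)]; rfl
    · rw [if_neg h, indicator_of_notMem (fun h' => h (e.1 h'))]
  simp only [Function.iterate_succ, Function.iterate_zero, Function.comp, id]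
  unfold UE
  rw [tsum_eq_single j, tsum_eq_single i]
  · rw [hmem, if_pos ⟨rfl, rfl⟩, mul_one, ← ENNReal.ofReal_mul (wt_nonneg j h0.le)]
    congr 1
    unfold wt br kk
    have hs : (0 : ℝ) < j + 1 + x := by positivity
    have hs' : (0 : ℝ) < j + 2 + x := by positivity
    have e1 : 1 + 1 / ((j : ℝ) + 1 + x) = (j + 2 + x) / (j + 1 + x) := by field_simp; ring
    have e2 : (i : ℝ) + 1 + 1 / ((j : ℝ) + 1 + x) =
        ((i + 1) * (j + 1 + x) + 1) / (j + 1 + x) := by field_simp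
    have e3 : (i : ℝ) + 2 + 1 / ((j : ℝ) + 1 + x) =
        ((i + 2) * (j + 1 + x) + 1) / (j + 1 + x) := by field_simp
    have h2 : (0 : ℝ) < (i + 1) * (j + 1 + x) + 1 := by positivity
    have h3 : (0 : ℝ) < (i + 2) * (j + 1 + x) + 1 := by positivity
    rw [e1, e2, e3]
    field_simp
  · intro i' hi'
    rw [hmem, if_neg (fun h => hi' h.2), mul_zero]
  · intro j' hj'
    rw [ENNReal.tsum_eq_zero.2, mul_zero]
    intro i'
    rw [hmem, if_neg (fun h => hj' h.1), mul_zero]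

lemma kk_pos (p : ℕ × ℕ) {x : ℝ} (hx : 0 ≤ x) : 0 < kk p x := by
  unfold kk; positivity

lemma kk_anti (p : ℕ × ℕ) {x y : ℝ} (hx : 0 ≤ x) (hxy : x ≤ y) : kk p y ≤ kk p x := by
  unfold kk
  refine one_div_le_one_div_of_le (by positivity) ?_
  have hy := hx.trans hxy
  gcongr

/-- Bounded distortion, uniformly over the rank-two cylinders. -/
lemma kk_zero_le (p : ℕ × ℕ) : kk p 0 ≤ 4 * kk p 1 := by
  unfold kk
  have h1 : (0 : ℝ) ≤ p.1 := Nat.cast_nonneg _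
  have h2 : (0 : ℝ) ≤ p.2 := Nat.cast_nonneg _
  have h3 := mul_nonneg h1 h2
  rw [mul_one_div, div_le_div_iff₀ (by positivity) (by positivity)]
  have a1 : ((p.1 : ℝ) + 1) * (p.2 + 1 + 1) + 1 ≤ 2 * ((p.1 + 1) * (p.2 + 1 + 0) + 1) := by
    nlinarith
  have a2 : ((p.1 : ℝ) + 2) * (p.2 + 1 + 1) + 1 ≤ 2 * ((p.1 + 2) * (p.2 + 1 + 0) + 1) := by
    nlinarith
  have := mul_le_mul a1 a2 (by positivity) (by positivity)
  linarith

/-- Splitting `(1 + x) k = 2 k - (1 - x) k` exhibits the difference of two antitone functions. -/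
lemma Osc_kk (p : ℕ × ℕ) : Osc (3 * kk p 0) (fun x => (1 + x) * kk p x) := by
  refine ⟨fun x hx => mul_nonneg (by linarith [hx.1]) (kk_pos p hx.1).le,
    fun x => 2 * kk p x, fun x => (1 - x) * kk p x, ?_, ?_, fun x _ => by ring, ?_⟩
  · intro x hx y hy hxy
    have := kk_anti p hx.1 hxy
    simp only
    linarith
  · intro x hx y hy hxy
    exact mul_le_mul (by linarith) (kk_anti p hx.1 hxy) (kk_pos p hy.1).le (by linarith [hx.2])
  · have := kk_pos p zero_le_one
    simp only
    linarith

/-- Gauss measure of a rank-two cylinder. -/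
noncomputable def cm (p : ℕ × ℕ) : ℝ := gaussMeasure.real (cyl p)

lemma ofReal_cm (p : ℕ × ℕ) : ENNReal.ofReal (cm p) = gaussMeasure (cyl p) := by
  unfold cm; simp

lemma gauss_cyl (p : ℕ × ℕ) : gaussMeasure (cyl p) =
    ∫⁻ x in Ioo (0 : ℝ) 1, ENNReal.ofReal (kk p x / Real.log 2) := by
  have h := duality_iterate (F := (cyl p).indicator 1) (G := fun _ => 1)
    (measurable_one.indicator (measurableSet_cyl p)) measurable_const 2
  simp only [mul_one] at h
  rw [lintegral_indicator_one (measurableSet_cyl p)] at h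
  rw [h, lintegral_gauss (measurable_UE_iterate
    (measurable_one.indicator (measurableSet_cyl p)) 2)]
  refine setLIntegral_congr_fun measurableSet_Ioo fun x hx => ?_
  have hl := log_two_pos
  have h0 := hx.1
  rw [UE_two_cyl p x hx]
  unfold dens
  rw [← ENNReal.ofReal_mul (by positivity)]
  congr 1
  field_simp

lemma cm_le (p : ℕ × ℕ) : cm p ≤ kk p 0 / Real.log 2 := by
  have hl := log_two_pos
  have h0 := kk_pos p le_rfl
  rw [← ENNReal.ofReal_le_ofReal_iff (by positivity), ofReal_cm, gauss_cyl]
  calc _ ≤ ∫⁻ x in Ioo (0 : ℝ) 1, ENNReal.ofReal (kk p 0 / Real.log 2) := by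
        refine setLIntegral_mono measurable_const fun x hx => ENNReal.ofReal_le_ofReal ?_
        have := kk_anti p le_rfl hx.1.le
        gcongr
    _ = _ := by simp

lemma le_cm (p : ℕ × ℕ) : kk p 1 / Real.log 2 ≤ cm p := by
  have hl := log_two_pos
  rw [← ENNReal.ofReal_le_ofReal_iff (by unfold cm; positivity), ofReal_cm, gauss_cyl]
  calc _ = ∫⁻ x in Ioo (0 : ℝ) 1, ENNReal.ofReal (kk p 1 / Real.log 2) := by simp
    _ ≤ _ := by
        refine setLIntegral_mono' measurableSet_Ioo fun x hx => ENNReal.ofReal_le_ofReal ?_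
        have := kk_anti p hx.1.le hx.2.le
        gcongr

lemma cm_nonneg (p : ℕ × ℕ) : 0 ≤ cm p := by unfold cm; positivity

/-- Exponential mixing (upper half) for rank-two cylinders. -/
lemma mixing (p : ℕ × ℕ) {G : ℝ → ENNReal} (hG : Measurable G) (n : ℕ) :
    ∫⁻ x, (cyl p).indicator 1 x * G (gaussMap^[n + 2] x) ∂gaussMeasure ≤
      ENNReal.ofReal ((1 + 12 / 2 ^ n) * cm p) * ∫⁻ x, G x ∂gaussMeasure := by
  have hF : Measurable ((cyl p).indicator (1 : ℝ → ENNReal)) :=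
    measurable_one.indicator (measurableSet_cyl p)
  have hval : ∀ x ∈ Ioo (0 : ℝ) 1, UE^[n + 2] ((cyl p).indicator 1) x =
      ENNReal.ofReal (UR^[n] (fun x => (1 + x) * kk p x) x) := by
    rw [Function.iterate_add]
    exact UE_iterate_ofReal (Osc_kk p) (UE_two_cyl p) n
  have hosc := (Osc_kk p).iterate n
  set w := UR^[n] (fun x => (1 + x) * kk p x) with hw
  have hmass : ∫⁻ x, UE^[n + 2] ((cyl p).indicator 1) x ∂gaussMeasure =
      ENNReal.ofReal (cm p) := by
    have h := duality_iterate hF (G := fun _ => 1) measurable_const (n + 2)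
    simp only [mul_one] at h
    rw [← h, lintegral_indicator_one (measurableSet_cyl p), ofReal_cm]
  have hl : Real.log 2 ≤ 1 := by linarith [Real.log_two_lt_d9]
  have hk : 3 * kk p 0 / 2 ^ n ≤ 12 / 2 ^ n * cm p := by
    have h1 := kk_zero_le p
    have h2 := le_cm p
    have h3 : kk p 1 ≤ kk p 1 / Real.log 2 := by
      rw [le_div_iff₀ log_two_pos]
      nlinarith [kk_pos p zero_le_one]
    rw [div_mul_eq_mul_div]
    exact div_le_div_of_nonneg_right (by linarith) (by positivity)
  have hsup : ∀ x ∈ Ioo (0 : ℝ) 1, UE^[n + 2] ((cyl p).indicator 1) x ≤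
      ENNReal.ofReal ((1 + 12 / 2 ^ n) * cm p) := by
    intro x hx
    have hp : 0 ≤ 12 / 2 ^ n * cm p := mul_nonneg (by positivity) (cm_nonneg p)
    -- average the pointwise oscillation bound over the second point
    calc UE^[n + 2] ((cyl p).indicator 1) x
        = ∫⁻ _, UE^[n + 2] ((cyl p).indicator 1) x ∂gaussMeasure := by simp
      _ ≤ ∫⁻ y, (UE^[n + 2] ((cyl p).indicator 1) y + ENNReal.ofReal (12 / 2 ^ n * cm p))
            ∂gaussMeasure := by
          refine lintegral_mono_ae ?_
          filter_upwards [ae_mem_Ioo] with y hy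
          rw [hval x hx, hval y hy,
            ← ENNReal.ofReal_add (hosc.1 y (Ioo_subset_Icc_self hy)) hp]
          refine ENNReal.ofReal_le_ofReal ?_
          have := hosc.sub_le (Ioo_subset_Icc_self hx) (Ioo_subset_Icc_self hy)
          linarith
      _ = ENNReal.ofReal (cm p) + ENNReal.ofReal (12 / 2 ^ n * cm p) := by
          rw [lintegral_add_right _ measurable_const, hmass]; simp
      _ = _ := by
          rw [← ENNReal.ofReal_add (cm_nonneg p) hp]
          congr 1; ring
  rw [duality_iterate hF hG (n + 2), ← lintegral_const_mul _ hG]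
  refine lintegral_mono_ae ?_
  filter_upwards [ae_mem_Ioo] with x hx
  exact mul_le_mul' (hsup x hx) le_rfl

/-! ### Moments of the truncated sums and the tail bound -/

/-- The product `a₁ a₂`, truncated to `0` where it exceeds `M`. -/
noncomputable def Xt (M : ℕ) (x : ℝ) : ℝ :=
  if pq 1 x * pq 2 x ≤ M then ((pq 1 x * pq 2 x : ℕ) : ℝ) else 0

/-- Value of `a₁ a₂` on the cylinder `cyl p`. -/
def cc (p : ℕ × ℕ) : ℕ := (p.1 + 1) * (p.2 + 1)

/-- Indices of the cylinders on which `a₁ a₂ ≤ M`. -/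
def PM (M : ℕ) : Finset (ℕ × ℕ) := (Finset.range M ×ˢ Finset.range M).filter fun p => cc p ≤ M

/-- First moment of `Xt M`. -/
noncomputable def m1 (M : ℕ) : ℝ := ∑ p ∈ PM M, (cc p : ℝ) * cm p

/-- Second moment of `Xt M`. -/
noncomputable def m2 (M : ℕ) : ℝ := ∑ p ∈ PM M, (cc p : ℝ) ^ 2 * cm p

lemma mem_PM {M : ℕ} {p : ℕ × ℕ} : p ∈ PM M ↔ cc p ≤ M := by
  unfold PM
  simp only [Finset.mem_filter, Finset.mem_product, Finset.mem_range, and_iff_right_iff_imp]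
  unfold cc
  intro h
  constructor <;> nlinarith

/-- A function of the truncated product that vanishes at `0` is a finite combination of cylinder
indicators. -/
lemma expand (M : ℕ) (f : ℕ → ENNReal) (f0 : f 0 = 0) (x : ℝ) :
    (if pq 1 x * pq 2 x ≤ M then f (pq 1 x * pq 2 x) else 0) =
      ∑ p ∈ PM M, f (cc p) * (cyl p).indicator 1 x := by
  by_cases h : pq 1 x * pq 2 x ≤ M ∧ pq 1 x ≠ 0 ∧ pq 2 x ≠ 0
  · obtain ⟨hM, h1, h2⟩ := h
    obtain ⟨i, hi⟩ := Nat.exists_eq_succ_of_ne_zero h1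
    obtain ⟨j, hj⟩ := Nat.exists_eq_succ_of_ne_zero h2
    have hmem : x ∈ cyl (i, j) := ⟨hi, hj⟩
    rw [if_pos hM, Finset.sum_eq_single (i, j)]
    · rw [indicator_of_mem hmem, Pi.one_apply, mul_one, hi, hj]; rfl
    · intro p _ hp
      rw [indicator_of_notMem, mul_zero]
      intro hx
      apply hp
      have := hx.1
      have := hx.2
      ext <;> simp only <;> omega
    · intro hn
      refine absurd (mem_PM.2 ?_) hn
      rw [hi, hj] at hM
      exact hM
  · rw [Finset.sum_eq_zero]
    · by_cases hM : pq 1 x * pq 2 x ≤ M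
      · have : pq 1 x * pq 2 x = 0 := by
          rw [Nat.mul_eq_zero]
          by_contra hc
          rw [not_or] at hc
          exact h ⟨hM, hc⟩
        rw [if_pos hM, this, f0]
      · rw [if_neg hM]
    · intro p hp
      rw [indicator_of_notMem, mul_zero]
      intro hx
      apply h
      rw [hx.1, hx.2]
      exact ⟨mem_PM.1 hp, by omega, by omega⟩

lemma ofReal_Xt (M : ℕ) (x : ℝ) : ENNReal.ofReal (Xt M x) =
    ∑ p ∈ PM M, ENNReal.ofReal (cc p) * (cyl p).indicator 1 x := by
  rw [← expand M (fun n => ENNReal.ofReal n) (by simp) x]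
  unfold Xt
  split_ifs <;> simp

lemma ofReal_Xt_sq (M : ℕ) (x : ℝ) : ENNReal.ofReal (Xt M x ^ 2) =
    ∑ p ∈ PM M, ENNReal.ofReal ((cc p : ℝ) ^ 2) * (cyl p).indicator 1 x := by
  rw [← expand M (fun n => ENNReal.ofReal ((n : ℝ) ^ 2)) (by simp) x]
  unfold Xt
  split_ifs <;> simp

lemma Xt_nonneg (M : ℕ) (x : ℝ) : 0 ≤ Xt M x := by unfold Xt; split_ifs <;> positivity

lemma Xt_le (M : ℕ) (x : ℝ) : Xt M x ≤ M := by
  unfold Xt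
  split_ifs with h
  · exact_mod_cast h
  · positivity

lemma measurable_Xt (M : ℕ) : Measurable (Xt M) := by
  unfold Xt
  have h : Measurable fun x => pq 1 x * pq 2 x := (measurable_pq 1).mul (measurable_pq 2)
  exact Measurable.ite (measurableSet_le h measurable_const)
    (measurable_from_top.comp h) measurable_const

lemma m1_nonneg (M : ℕ) : 0 ≤ m1 M :=
  Finset.sum_nonneg fun p _ => mul_nonneg (by positivity) (cm_nonneg p)

lemma m2_nonneg (M : ℕ) : 0 ≤ m2 M :=
  Finset.sum_nonneg fun p _ => mul_nonneg (by positivity) (cm_nonneg p)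

lemma measurable_ind (p : ℕ × ℕ) : Measurable ((cyl p).indicator (1 : ℝ → ENNReal)) :=
  measurable_one.indicator (measurableSet_cyl p)

/-- Weighted sums of cylinder indicators against a later observable. -/
lemma lintegral_sum_ind (M : ℕ) (v : ℕ × ℕ → ℝ) {H : ℝ → ENNReal} (hH : Measurable H) :
    ∫⁻ x, (∑ p ∈ PM M, ENNReal.ofReal (v p) * (cyl p).indicator 1 x) * H x ∂gaussMeasure =
      ∑ p ∈ PM M, ENNReal.ofReal (v p) *
        ∫⁻ x, (cyl p).indicator 1 x * H x ∂gaussMeasure := by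
  simp_rw [Finset.sum_mul, mul_assoc]
  rw [lintegral_finsetSum]
  · refine Finset.sum_congr rfl fun p _ => ?_
    rw [lintegral_const_mul]
    exact (measurable_ind p).mul hH
  · intro p _
    exact ((measurable_ind p).mul hH).const_mul _

lemma lintegral_sum_cyl (M : ℕ) (v : ℕ × ℕ → ℝ) (hv : ∀ p, 0 ≤ v p) :
    ∫⁻ x, (∑ p ∈ PM M, ENNReal.ofReal (v p) * (cyl p).indicator 1 x) ∂gaussMeasure =
      ENNReal.ofReal (∑ p ∈ PM M, v p * cm p) := by
  have := lintegral_sum_ind M v (H := fun _ => 1) measurable_const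
  simp only [mul_one] at this
  rw [this, ENNReal.ofReal_sum_of_nonneg fun p _ => mul_nonneg (hv p) (cm_nonneg p)]
  refine Finset.sum_congr rfl fun p _ => ?_
  rw [lintegral_indicator_one (measurableSet_cyl p), ENNReal.ofReal_mul (hv p), ofReal_cm]

lemma integral_Xt (M : ℕ) : ∫ x, Xt M x ∂gaussMeasure = m1 M := by
  rw [integral_eq_lintegral_of_nonneg_ae (ae_of_all _ (Xt_nonneg M))
    (measurable_Xt M).aestronglyMeasurable]
  simp_rw [ofReal_Xt]
  rw [lintegral_sum_cyl M (fun p => (cc p : ℝ)) (fun p => by positivity)]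
  exact ENNReal.toReal_ofReal (m1_nonneg M)

lemma integral_Xt_sq (M : ℕ) : ∫ x, Xt M x ^ 2 ∂gaussMeasure = m2 M := by
  rw [integral_eq_lintegral_of_nonneg_ae (ae_of_all _ fun x => sq_nonneg _)
    ((measurable_Xt M).pow_const 2).aestronglyMeasurable]
  simp_rw [ofReal_Xt_sq]
  rw [lintegral_sum_cyl M (fun p => (cc p : ℝ) ^ 2) (fun p => by positivity)]
  exact ENNReal.toReal_ofReal (m2_nonneg M)

lemma integral_Xt_mix (M n : ℕ) :
    ∫ x, Xt M x * Xt M (gaussMap^[n + 2] x) ∂gaussMeasure ≤ (1 + 12 / 2 ^ n) * m1 M ^ 2 := by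
  have hG : Measurable fun x => ENNReal.ofReal (Xt M x) := (measurable_Xt M).ennreal_ofReal
  have hm := (measurable_Xt M).comp (measurable_gaussMap.iterate (n + 2))
  rw [integral_eq_lintegral_of_nonneg_ae
    (ae_of_all _ fun x => mul_nonneg (Xt_nonneg M _) (Xt_nonneg M _))
    ((measurable_Xt M).mul hm).aestronglyMeasurable]
  refine ENNReal.toReal_le_of_le_ofReal (by positivity) ?_
  have hI : ∫⁻ x, ENNReal.ofReal (Xt M x) ∂gaussMeasure = ENNReal.ofReal (m1 M) := by
    simp_rw [ofReal_Xt]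
    exact lintegral_sum_cyl M (fun p => (cc p : ℝ)) (fun p => by positivity)
  calc _ = ∫⁻ x, (∑ p ∈ PM M, ENNReal.ofReal (cc p) * (cyl p).indicator 1 x) *
        ENNReal.ofReal (Xt M (gaussMap^[n + 2] x)) ∂gaussMeasure := by
        refine lintegral_congr fun x => ?_
        rw [← ofReal_Xt, ENNReal.ofReal_mul (Xt_nonneg M _)]
    _ = ∑ p ∈ PM M, ENNReal.ofReal (cc p) * ∫⁻ x, (cyl p).indicator 1 x *
          ENNReal.ofReal (Xt M (gaussMap^[n + 2] x)) ∂gaussMeasure :=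
        lintegral_sum_ind M (fun p => (cc p : ℝ)) hm.ennreal_ofReal
    _ ≤ ∑ p ∈ PM M, ENNReal.ofReal (cc p * ((1 + 12 / 2 ^ n) * cm p) * m1 M) := by
        refine Finset.sum_le_sum fun p _ => ?_
        have hc : 0 ≤ (1 + 12 / 2 ^ n) * cm p := mul_nonneg (by positivity) (cm_nonneg p)
        rw [ENNReal.ofReal_mul (mul_nonneg (by positivity) hc),
          ENNReal.ofReal_mul (by positivity), mul_assoc]
        refine mul_le_mul_right ?_ _
        rw [← hI]
        exact mixing p hG n
    _ = ENNReal.ofReal ((1 + 12 / 2 ^ n) * m1 M ^ 2) := by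
        rw [← ENNReal.ofReal_sum_of_nonneg]
        · congr 1
          rw [← Finset.sum_mul, sq, ← mul_assoc]
          congr 1
          conv_rhs => rw [m1, Finset.mul_sum]
          exact Finset.sum_congr rfl fun p _ => by ring
        · intro p _
          have := cm_nonneg p
          have := m1_nonneg M
          positivity

/-- The constant in the covariance bound `cov_bound`. -/
noncomputable def KK (M : ℕ) : ℝ := 2 * m2 M + 48 * m1 M ^ 2

lemma integrable_bdd {f : ℝ → ℝ} (hf : Measurable f) {c : ℝ} (h : ∀ x, |f x| ≤ c) :
    Integrable f gaussMeasure :=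
  Integrable.of_bound hf.aestronglyMeasurable c (ae_of_all _ h)

lemma abs_Xt_le (M : ℕ) (x : ℝ) : |Xt M x| ≤ M := by
  rw [abs_of_nonneg (Xt_nonneg M x)]; exact Xt_le M x

lemma measurable_Xt_iter (M n : ℕ) : Measurable fun x => Xt M (gaussMap^[n] x) :=
  (measurable_Xt M).comp (measurable_gaussMap.iterate n)

lemma integrable_Xt_mul (M i j : ℕ) :
    Integrable (fun x => Xt M (gaussMap^[i] x) * Xt M (gaussMap^[j] x)) gaussMeasure := by
  refine integrable_bdd (c := M * M)
    ((measurable_Xt_iter M i).mul (measurable_Xt_iter M j)) fun x => ?_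
  rw [abs_mul]
  exact mul_le_mul (abs_Xt_le M _) (abs_Xt_le M _) (abs_nonneg _) (by positivity)

lemma integral_comp_iterate {f : ℝ → ℝ} (hf : Measurable f) (n : ℕ) :
    ∫ x, f (gaussMap^[n] x) ∂gaussMeasure = ∫ x, f x ∂gaussMeasure := by
  have h := measurePreserving_iterate n
  have := integral_map (μ := gaussMeasure) h.measurable.aemeasurable
    (f := f) hf.aestronglyMeasurable
  rw [h.map_eq] at this
  exact this.symm

/-- Exponential decay of correlations for the truncated product. Lags at least two follow from
mixing; at lag one the two factors share a partial quotient, and `2 a b ≤ a² + b²` is used instead. -/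
lemma cov_bound (M d : ℕ) :
    ∫ x, Xt M x * Xt M (gaussMap^[d] x) ∂gaussMeasure ≤ m1 M ^ 2 + KK M / 2 ^ d := by
  have h1 := sq_nonneg (m1 M)
  have h2 := m2_nonneg M
  match d with
  | 0 =>
    have := integral_Xt_sq M
    simp only [sq] at this
    simp only [Function.iterate_zero, id, this, KK]
    norm_num
    linarith
  | 1 =>
    have hsq : Measurable fun x => Xt M x ^ 2 := (measurable_Xt M).pow_const 2
    have hi0 : Integrable (fun x => Xt M x ^ 2) gaussMeasure := by
      simpa [sq] using integrable_Xt_mul M 0 0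
    have hi1 : Integrable (fun x => Xt M (gaussMap^[1] x) ^ 2) gaussMeasure := by
      simpa [sq] using integrable_Xt_mul M 1 1
    have : ∫ x, Xt M x * Xt M (gaussMap^[1] x) ∂gaussMeasure ≤
        ∫ x, (Xt M x ^ 2 + Xt M (gaussMap^[1] x) ^ 2) / 2 ∂gaussMeasure := by
      refine integral_mono (integrable_Xt_mul M 0 1) ((hi0.add hi1).div_const 2) fun x => ?_
      simp only
      nlinarith [sq_nonneg (Xt M x - Xt M (gaussMap^[1] x))]
    rw [integral_div, integral_add hi0 hi1, integral_comp_iterate hsq 1, integral_Xt_sq] at this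
    simp only [KK]
    linarith
  | n + 2 =>
    refine (integral_Xt_mix M n).trans ?_
    have : KK M / 2 ^ (n + 2) = 12 / 2 ^ n * m1 M ^ 2 + 2 * m2 M / 2 ^ (n + 2) := by
      unfold KK
      rw [pow_add]
      field_simp
      ring
    rw [this]
    have : 0 ≤ 2 * m2 M / 2 ^ (n + 2) := by positivity
    linarith

lemma cov_bound' (M : ℕ) {i j : ℕ} (h : i ≤ j) :
    ∫ x, Xt M (gaussMap^[i] x) * Xt M (gaussMap^[j] x) ∂gaussMeasure ≤
      m1 M ^ 2 + KK M / 2 ^ (j - i) := by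
  have hf : Measurable fun x => Xt M x * Xt M (gaussMap^[j - i] x) :=
    (measurable_Xt M).mul (measurable_Xt_iter M _)
  have := integral_comp_iterate hf i
  simp only [← Function.iterate_add_apply, Nat.sub_add_cancel h] at this
  rw [this]
  exact cov_bound M _

/-- The Birkhoff sum of the truncated observable. -/
noncomputable def Y (M N : ℕ) (x : ℝ) : ℝ := ∑ i ∈ Finset.range N, Xt M (gaussMap^[i] x)

lemma measurable_Y (M N : ℕ) : Measurable (Y M N) :=
  Finset.measurable_sum _ fun i _ => measurable_Xt_iter M i

lemma abs_Y_le (M N : ℕ) (x : ℝ) : |Y M N x| ≤ N * M := by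
  unfold Y
  refine (Finset.abs_sum_le_sum_abs _ _).trans ?_
  refine (Finset.sum_le_card_nsmul _ _ (M : ℝ) fun i _ => abs_Xt_le M _).trans ?_
  simp

lemma integral_Y (M N : ℕ) : ∫ x, Y M N x ∂gaussMeasure = N * m1 M := by
  unfold Y
  rw [integral_finsetSum]
  · simp_rw [integral_comp_iterate (measurable_Xt M), integral_Xt]
    simp
  · exact fun i _ => integrable_bdd (measurable_Xt_iter M i) fun x => abs_Xt_le M _

lemma sum_geom (K : ℝ) (N : ℕ) :
    ∑ j ∈ Finset.range N, K / 2 ^ (N - j) = K - K / 2 ^ N := by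
  induction N with
  | zero => simp
  | succ N ih =>
    rw [Finset.sum_range_succ]
    have : ∀ j ∈ Finset.range N, K / 2 ^ (N + 1 - j) = K / 2 ^ (N - j) / 2 := by
      intro j hj
      have hj := Finset.mem_range.1 hj
      rw [show N + 1 - j = (N - j) + 1 by omega, pow_succ]
      field_simp
    rw [Finset.sum_congr rfl this, ← Finset.sum_div, ih]
    simp only [Nat.add_sub_cancel_left, pow_succ]
    field_simp
    ring

lemma KK_nonneg (M : ℕ) : 0 ≤ KK M := by
  have := m2_nonneg M
  unfold KK; positivity

/-- Since the covariances are summable in the lag, the variance grows only linearly in `N`. -/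
lemma integral_Y_sq (M N : ℕ) :
    ∫ x, Y M N x ^ 2 ∂gaussMeasure ≤ N ^ 2 * m1 M ^ 2 + 3 * KK M * N := by
  induction N with
  | zero => simp [Y]
  | succ N ih =>
    have e : ∀ x, Y M (N + 1) x ^ 2 = Y M N x ^ 2 +
        (2 * (∑ j ∈ Finset.range N, Xt M (gaussMap^[j] x) * Xt M (gaussMap^[N] x)) +
          Xt M (gaussMap^[N] x) * Xt M (gaussMap^[N] x)) := by
      intro x
      unfold Y
      rw [Finset.sum_range_succ, ← Finset.sum_mul]
      ring
    have i1 : Integrable (fun x => Y M N x ^ 2) gaussMeasure := by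
      refine integrable_bdd (c := (N * M) ^ 2) ((measurable_Y M N).pow_const 2) fun x => ?_
      rw [abs_pow]
      exact pow_le_pow_left₀ (abs_nonneg _) (abs_Y_le M N x) 2
    have i2 : Integrable (fun x => 2 * (∑ j ∈ Finset.range N,
        Xt M (gaussMap^[j] x) * Xt M (gaussMap^[N] x))) gaussMeasure :=
      (integrable_finsetSum _ fun j _ => integrable_Xt_mul M j N).const_mul 2
    have i3 := integrable_Xt_mul M N N
    have i23 : Integrable (fun x => 2 * (∑ j ∈ Finset.range N,
        Xt M (gaussMap^[j] x) * Xt M (gaussMap^[N] x)) +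
          Xt M (gaussMap^[N] x) * Xt M (gaussMap^[N] x)) gaussMeasure := i2.add i3
    simp_rw [e]
    rw [integral_add i1 i23, integral_add i2 i3, integral_const_mul,
      integral_finsetSum _ fun j _ => integrable_Xt_mul M j N]
    have b1 : ∑ j ∈ Finset.range N,
        ∫ x, Xt M (gaussMap^[j] x) * Xt M (gaussMap^[N] x) ∂gaussMeasure ≤
        N * m1 M ^ 2 + KK M := by
      calc _ ≤ ∑ j ∈ Finset.range N, (m1 M ^ 2 + KK M / 2 ^ (N - j)) :=
            Finset.sum_le_sum fun j hj => cov_bound' M (Finset.mem_range.1 hj).le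
        _ = N * m1 M ^ 2 + (KK M - KK M / 2 ^ N) := by
            rw [Finset.sum_add_distrib, sum_geom]; simp
        _ ≤ _ := by
            have : 0 ≤ KK M / 2 ^ N := div_nonneg (KK_nonneg M) (by positivity)
            linarith
    have b2 := cov_bound' M (le_refl N)
    simp only [Nat.sub_self, pow_zero, div_one] at b2
    push_cast
    nlinarith

/-- Chebyshev's inequality for the truncated Birkhoff sum. -/
lemma chebyshev (M N : ℕ) {c : ℝ} (hc : 0 < c) :
    gaussMeasure {x | c ≤ |Y M N x - N * m1 M|} ≤ ENNReal.ofReal (3 * KK M * N / c ^ 2) := by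
  have hL : MemLp (Y M N) 2 gaussMeasure :=
    MemLp.of_bound (measurable_Y M N).aestronglyMeasurable (N * M) (ae_of_all _ (abs_Y_le M N))
  have h := ProbabilityTheory.meas_ge_le_variance_div_sq hL hc
  rw [integral_Y] at h
  refine h.trans (ENNReal.ofReal_le_ofReal ?_)
  refine div_le_div_of_nonneg_right ?_ (by positivity)
  rw [ProbabilityTheory.variance_eq_sub hL, integral_Y]
  have := integral_Y_sq M N
  simp only [Pi.pow_apply]
  linarith

lemma gauss_le_volume (A : Set ℝ) : gaussMeasure A ≤ 2 * volume A := by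
  have hle : gaussMeasure ≤ (2 : ENNReal) • volume.restrict (Ioo (0 : ℝ) 1) := by
    rw [← withDensity_const]
    refine withDensity_mono ?_
    filter_upwards [ae_restrict_mem measurableSet_Ioo] with x hx
    have h : 1 / (Real.log 2 * (1 + x)) ≤ 2 := by
      have := Real.log_two_gt_d9
      have := hx.1
      rw [div_le_iff₀ (by positivity)]
      nlinarith
    calc _ ≤ ENNReal.ofReal 2 := ENNReal.ofReal_le_ofReal h
      _ = 2 := by simp
  refine (hle A).trans ?_
  rw [Measure.smul_apply, smul_eq_mul]
  exact mul_le_mul_right (Measure.restrict_apply_le _ _) _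

/-- If `a₁ a₂ > M` then either `a₁ > M`, or `x` lies within relative distance `1 / M` of the
right end of its rank-one cylinder. -/
lemma tail_subset {M : ℕ} (hM : 0 < M) {x : ℝ} (hx : x ∈ Ioo (0 : ℝ) 1)
    (h : M < pq 1 x * pq 2 x) : x ∈ Ioc 0 (1 / (M : ℝ)) ∪
      ⋃ i ∈ Finset.range M, Ioc (1 / ((i + 1 : ℝ) * (1 + 1 / M))) (1 / (i + 1 : ℝ)) := by
  have hM' : (0 : ℝ) < M := by exact_mod_cast hM
  have h0 := hx.1
  have hle : (pq 1 x : ℝ) ≤ 1 / x := Nat.floor_le (by positivity)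
  by_cases hc : M < pq 1 x
  · left
    refine ⟨h0, ?_⟩
    have : (M : ℝ) < pq 1 x := by exact_mod_cast hc
    rw [le_div_iff₀ hM', mul_comm, ← le_div_iff₀ h0]
    linarith
  · right
    have hp1 : pq 1 x ≠ 0 := by rintro h'; simp [h'] at h
    have hp2 : pq 2 x ≠ 0 := by rintro h'; simp [h'] at h
    obtain ⟨i, hi⟩ := Nat.exists_eq_succ_of_ne_zero hp1
    rw [hi] at hle
    push_cast at hle
    simp only [mem_iUnion]
    refine ⟨i, Finset.mem_range.2 (by omega), ?_, ?_⟩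
    · have hT : gaussMap x = 1 / x - (i + 1) := by
        unfold gaussMap
        rw [if_neg h0.ne']
        have : (⌊1 / x⌋ : ℝ) = ((pq 1 x : ℕ) : ℝ) := by
          unfold pq
          simp only [Nat.sub_self, Function.iterate_zero, id]
          rw [← natCast_floor_eq_intCast_floor (by positivity)]
        rw [this, hi]
        push_cast; ring
      have hTnn : 0 ≤ gaussMap x := by rw [hT]; linarith
      have hTpos : 0 < gaussMap x := by
        refine lt_of_le_of_ne hTnn fun h' => hp2 ?_
        unfold pq
        simp [← h']
      have h2 : (pq 2 x : ℝ) ≤ 1 / gaussMap x := Nat.floor_le (by positivity)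
      rw [le_div_iff₀ hTpos] at h2
      have h3 : (M : ℝ) < (i + 1) * pq 2 x := by
        rw [hi] at h; exact_mod_cast h
      have h4 : M * gaussMap x < i + 1 := by
        have := mul_lt_mul_of_pos_right h3 hTpos
        have hi0 : (0 : ℝ) ≤ i := Nat.cast_nonneg i
        nlinarith
      have h5 : 1 / x < (i + 1) * (1 + 1 / M) := by
        rw [hT, mul_comm, ← lt_div_iff₀ hM'] at h4
        have : ((i : ℝ) + 1) * (1 + 1 / M) = (i + 1) + (i + 1) / M := by ring
        rw [this]; linarith
      rw [div_lt_comm₀ (by positivity) h0]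
      exact h5
    · rw [le_div_comm₀ h0 (by positivity)]
      exact hle

/-- Tail bound for the product `a₁ a₂`. -/
lemma tail_bound {M : ℕ} (hM : 0 < M) :
    gaussMeasure {x | M < pq 1 x * pq 2 x} ≤ ENNReal.ofReal (2 * (2 + Real.log M) / M) := by
  have hM' : (0 : ℝ) < M := by exact_mod_cast hM
  set A : Set ℝ := Ioc 0 (1 / (M : ℝ)) ∪
      ⋃ i ∈ Finset.range M, Ioc (1 / ((i + 1 : ℝ) * (1 + 1 / M))) (1 / (i + 1 : ℝ)) with hA
  have hsub : gaussMeasure {x | M < pq 1 x * pq 2 x} ≤ gaussMeasure A := by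
    refine measure_mono_ae ?_
    filter_upwards [ae_mem_Ioo] with x hx h
    exact tail_subset hM hx h
  refine hsub.trans ((gauss_le_volume A).trans ?_)
  have hvol : volume A ≤ ENNReal.ofReal ((2 + Real.log M) / M) := by
    calc volume A ≤ volume (Ioc 0 (1 / (M : ℝ))) + ∑ i ∈ Finset.range M,
          volume (Ioc (1 / ((i + 1 : ℝ) * (1 + 1 / M))) (1 / (i + 1 : ℝ))) :=
          (measure_union_le _ _).trans (add_le_add le_rfl (measure_biUnion_finset_le _ _))
      _ ≤ ENNReal.ofReal (1 / M) +
          ∑ i ∈ Finset.range M, ENNReal.ofReal (1 / M * ((i + 1 : ℕ) : ℝ)⁻¹) := by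
          refine add_le_add (by simp) (Finset.sum_le_sum fun i _ => ?_)
          rw [Real.volume_Ioc]
          refine ENNReal.ofReal_le_ofReal ?_
          push_cast
          have : 1 / ((i : ℝ) + 1) - 1 / ((i + 1) * (1 + 1 / M)) =
              1 / ((M + 1) * (i + 1)) := by
            field_simp
            ring
          rw [this, ← one_div, one_div_mul_one_div]
          refine one_div_le_one_div_of_le (by positivity) ?_
          gcongr
          linarith
      _ = ENNReal.ofReal (1 / M + 1 / M * harmonic M) := by
          rw [← ENNReal.ofReal_sum_of_nonneg fun i _ => by positivity,
            ← ENNReal.ofReal_add (by positivity)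
              (Finset.sum_nonneg fun i _ => by positivity), ← Finset.mul_sum]
          congr 3
          unfold harmonic
          push_cast
          rfl
      _ ≤ _ := by
          refine ENNReal.ofReal_le_ofReal ?_
          have := harmonic_le_one_add_log M
          calc _ ≤ 1 / (M : ℝ) + 1 / M * (1 + Real.log M) := by gcongr
            _ = _ := by ring
  calc 2 * volume A ≤ ENNReal.ofReal 2 * ENNReal.ofReal ((2 + Real.log M) / M) := by
        rw [show ENNReal.ofReal 2 = 2 by simp]
        exact mul_le_mul_right hvol _
    _ = _ := by
        rw [← ENNReal.ofReal_mul (by norm_num)]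
        congr 1; ring

/-! ### Asymptotics of the truncated moments -/

/-- The sum of `1 / (a b)` over `a, b ≥ 1` with `a b ≤ M`. -/
noncomputable def DD (M : ℕ) : ℝ := ∑ p ∈ PM M, 1 / (cc p : ℝ)

lemma sum_PM (M : ℕ) (f : ℕ × ℕ → ℝ) : ∑ p ∈ PM M, f p =
    ∑ i ∈ Finset.range M, ∑ j ∈ Finset.range (M / (i + 1)), f (i, j) := by
  unfold PM
  rw [Finset.sum_filter, Finset.sum_product]
  refine Finset.sum_congr rfl fun i _ => ?_
  rw [← Finset.sum_filter (fun j => cc (i, j) ≤ M) (fun j => f (i, j))]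
  refine Finset.sum_congr (Finset.ext fun j => ?_) fun _ _ => rfl
  rw [Finset.mem_filter, Finset.mem_range, Finset.mem_range, ← Nat.succ_le_iff (n := M / (i + 1)),
    Nat.le_div_iff_mul_le (Nat.succ_pos i), Nat.succ_eq_add_one, mul_comm (j + 1) (i + 1)]
  unfold cc
  refine ⟨fun h => h.2, fun h => ⟨?_, h⟩⟩
  nlinarith

lemma harmonic_cast (M : ℕ) : (harmonic M : ℝ) = ∑ i ∈ Finset.range M, 1 / ((i : ℝ) + 1) := by
  unfold harmonic
  push_cast
  simp only [one_div]

lemma DD_eq (M : ℕ) : DD M =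
    ∑ i ∈ Finset.range M, 1 / ((i : ℝ) + 1) * (harmonic (M / (i + 1)) : ℝ) := by
  unfold DD
  rw [sum_PM]
  refine Finset.sum_congr rfl fun i _ => ?_
  rw [harmonic_cast, Finset.mul_sum]
  refine Finset.sum_congr rfl fun j _ => ?_
  unfold cc
  push_cast
  rw [one_div_mul_one_div]

lemma log_step_le (i : ℕ) : Real.log (i + 2) - Real.log (i + 1) ≤ 1 / ((i : ℝ) + 1) := by
  rw [← Real.log_div (by positivity) (by positivity)]
  refine (Real.log_le_sub_one_of_pos (by positivity)).trans (le_of_eq ?_)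
  field_simp
  ring

lemma le_log_step (i : ℕ) : 1 / ((i : ℝ) + 2) ≤ Real.log (i + 2) - Real.log (i + 1) := by
  rw [← Real.log_div (by positivity) (by positivity)]
  refine le_trans (le_of_eq ?_) (Real.one_sub_inv_le_log_of_pos (by positivity))
  field_simp
  ring

/-- The inner sum is a harmonic number, at least `log M - log a`; the resulting sum over `a` is
compared with the telescoping differences of `(log M - log a)² / 2`. -/
lemma DD_lower {M : ℕ} (hM : 0 < M) : Real.log M ^ 2 / 2 - 1 ≤ DD M := by
  have hM' : (0 : ℝ) < M := by exact_mod_cast hM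
  set φ : ℕ → ℝ := fun i => (Real.log M - Real.log (i + 1)) ^ 2 / 2 with hφ
  have h1 : ∀ i ∈ Finset.range M,
      φ i - φ (i + 1) ≤ 1 / ((i : ℝ) + 1) * (harmonic (M / (i + 1)) : ℝ) := by
    intro i hi
    have hi' : (i : ℝ) + 1 ≤ M := by exact_mod_cast Finset.mem_range.1 hi
    have hX : 0 ≤ Real.log M - Real.log (i + 1) :=
      sub_nonneg.2 (Real.log_le_log (by positivity) hi')
    have hh : Real.log M - Real.log (i + 1) ≤ (harmonic (M / (i + 1)) : ℝ) := by
      have h := log_le_harmonic_floor ((M : ℝ) / ((i + 1 : ℕ) : ℝ)) (by positivity)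
      rw [Nat.floor_div_eq_div, Real.log_div (by positivity) (by positivity)] at h
      push_cast at h
      exact h
    have hd := log_step_le i
    have e : φ i - φ (i + 1) ≤
        (Real.log (i + 2) - Real.log (i + 1)) * (Real.log M - Real.log (i + 1)) := by
      simp only [hφ]
      push_cast
      rw [show (i : ℝ) + 1 + 1 = i + 2 by ring]
      nlinarith [sq_nonneg (Real.log ((i : ℝ) + 2) - Real.log (i + 1))]
    refine e.trans ?_
    exact mul_le_mul hd hh hX (by positivity)
  have h2 := Finset.sum_le_sum h1
  rw [Finset.sum_range_sub' φ M, ← DD_eq] at h2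
  have h3 : φ 0 = Real.log M ^ 2 / 2 := by simp [hφ]
  have h4 : φ M ≤ 1 := by
    obtain ⟨m, rfl⟩ := Nat.exists_eq_succ_of_ne_zero hM.ne'
    have a := log_step_le m
    have b := le_log_step m
    have c : 1 / ((m : ℝ) + 1) ≤ 1 := by rw [div_le_one (by positivity)]; simp
    have d : 0 ≤ 1 / ((m : ℝ) + 2) := by positivity
    simp only [hφ, Nat.succ_eq_add_one]
    push_cast
    rw [show (m : ℝ) + 1 + 1 = m + 2 by ring]
    nlinarith
  linarith

lemma DD_upper {M : ℕ} (hM : 0 < M) :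
    DD M ≤ Real.log M ^ 2 / 2 + 2 * Real.log M + 1 := by
  have hM' : (0 : ℝ) < M := by exact_mod_cast hM
  set g : ℕ → ℝ := fun i => 1 / ((i : ℝ) + 1) * (Real.log M - Real.log (i + 1)) with hg
  set φ : ℕ → ℝ := fun i => (Real.log M - Real.log (i + 1)) ^ 2 / 2 with hφ
  have h1 : DD M ≤ ∑ i ∈ Finset.range M, g i + harmonic M := by
    rw [DD_eq, harmonic_cast, ← Finset.sum_add_distrib]
    refine Finset.sum_le_sum fun i hi => ?_
    have hi' : (i : ℝ) + 1 ≤ M := by exact_mod_cast Finset.mem_range.1 hi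
    have h := harmonic_floor_le_one_add_log ((M : ℝ) / ((i + 1 : ℕ) : ℝ))
      (by push_cast; rw [le_div_iff₀ (by positivity)]; linarith)
    rw [Nat.floor_div_eq_div, Real.log_div (by positivity) (by positivity)] at h
    push_cast at h
    have hp : 0 ≤ 1 / ((i : ℝ) + 1) := by positivity
    simp only [hg]
    nlinarith [mul_le_mul_of_nonneg_left h hp]
  have h2 : ∑ i ∈ Finset.range M, g i ≤ Real.log M ^ 2 / 2 + Real.log M := by
    obtain ⟨m, hm⟩ := Nat.exists_eq_succ_of_ne_zero hM.ne'
    rw [hm, Nat.succ_eq_add_one, Finset.sum_range_succ', ← Nat.succ_eq_add_one, ← hm]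
    have h3 : ∀ i ∈ Finset.range m, g (i + 1) ≤ φ i - φ (i + 1) := by
      intro i hi
      have hi' : (i : ℝ) + 2 ≤ M := by
        have := Finset.mem_range.1 hi
        have : i + 2 ≤ M := by omega
        exact_mod_cast this
      have hX : 0 ≤ Real.log M - Real.log (i + 2) :=
        sub_nonneg.2 (Real.log_le_log (by positivity) hi')
      have hd := le_log_step i
      simp only [hφ, hg]
      push_cast
      rw [show (i : ℝ) + 1 + 1 = i + 2 by ring]
      have := mul_le_mul_of_nonneg_right hd hX
      nlinarith [sq_nonneg (Real.log ((i : ℝ) + 2) - Real.log (i + 1))]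
    have h4 := Finset.sum_le_sum h3
    rw [Finset.sum_range_sub' φ m] at h4
    have h5 : φ 0 = Real.log M ^ 2 / 2 := by simp [hφ]
    have h6 : 0 ≤ φ m := by simp only [hφ]; positivity
    have h7 : g 0 = Real.log M := by simp [hg]
    linarith
  linarith [harmonic_le_one_add_log M]

lemma kk_zero_le_cc (p : ℕ × ℕ) : kk p 0 ≤ 1 / (cc p : ℝ) ^ 2 := by
  unfold kk cc
  push_cast
  refine one_div_le_one_div_of_le (by positivity) ?_
  rw [sq]
  gcongr <;> nlinarith [(Nat.cast_nonneg p.1 : (0 : ℝ) ≤ p.1), (Nat.cast_nonneg p.2 : (0 : ℝ) ≤ p.2)]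

lemma cc_pos (p : ℕ × ℕ) : (0 : ℝ) < cc p := by unfold cc; positivity

lemma m1_upper (M : ℕ) : m1 M * Real.log 2 ≤ DD M := by
  have hl := log_two_pos
  unfold m1 DD
  rw [Finset.sum_mul]
  refine Finset.sum_le_sum fun p _ => ?_
  have h1 := cm_le p
  rw [le_div_iff₀ hl] at h1
  have h2 := h1.trans (kk_zero_le_cc p)
  have hc := cc_pos p
  calc (cc p : ℝ) * cm p * Real.log 2 = cc p * (cm p * Real.log 2) := by ring
    _ ≤ cc p * (1 / (cc p : ℝ) ^ 2) := by gcongr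
    _ = 1 / cc p := by field_simp

lemma m2_upper {M : ℕ} : m2 M * Real.log 2 ≤ M * (1 + Real.log M) := by
  have hl := log_two_pos
  have h1 : m2 M * Real.log 2 ≤ ∑ p ∈ PM M, (1 : ℝ) := by
    unfold m2
    rw [Finset.sum_mul]
    refine Finset.sum_le_sum fun p _ => ?_
    have h1 := cm_le p
    rw [le_div_iff₀ hl] at h1
    have h2 := h1.trans (kk_zero_le_cc p)
    have hc := cc_pos p
    calc (cc p : ℝ) ^ 2 * cm p * Real.log 2 = (cc p : ℝ) ^ 2 * (cm p * Real.log 2) := by ring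
      _ ≤ (cc p : ℝ) ^ 2 * (1 / (cc p : ℝ) ^ 2) := by gcongr
      _ = 1 := by field_simp
  refine h1.trans ?_
  rw [sum_PM]
  calc ∑ i ∈ Finset.range M, ∑ j ∈ Finset.range (M / (i + 1)), (1 : ℝ)
      ≤ ∑ i ∈ Finset.range M, M * (1 / ((i : ℝ) + 1)) := by
        refine Finset.sum_le_sum fun i _ => ?_
        have := @Nat.cast_div_le ℝ _ _ _ M (i + 1)
        simp only [Finset.sum_const, Finset.card_range, nsmul_eq_mul, mul_one]
        push_cast at this
        rw [mul_one_div]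
        exact this
    _ = M * harmonic M := by rw [← Finset.mul_sum, ← harmonic_cast]
    _ ≤ _ := by
        have := harmonic_le_one_add_log M
        gcongr

/-- Lower approximation of `1 / (i + 1)`, with a summable defect. -/
noncomputable def vv (i : ℕ) : ℝ := (i + 1) / ((i : ℝ) + 3) ^ 2

lemma vv_defect (i : ℕ) : 1 / ((i : ℝ) + 1) - vv i ≤ 4 / (i + 1) - 4 / ((i + 1 : ℕ) + 1) := by
  unfold vv
  push_cast
  have h : (4 / ((i : ℝ) + 1) - 4 / (i + 1 + 1)) - (1 / ((i : ℝ) + 1) - (i + 1) / ((i : ℝ) + 3) ^ 2)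
      = (4 * (2 * i + 5)) / ((i + 1) * (i + 2) * (i + 3) ^ 2) := by
    have : (i : ℝ) + 1 + 1 = i + 2 := by ring
    rw [this]
    field_simp
    ring
  have : 0 ≤ (4 * (2 * (i : ℝ) + 5)) / ((i + 1) * (i + 2) * (i + 3) ^ 2) := by positivity
  linarith

lemma vv_le (i : ℕ) : vv i ≤ 1 / ((i : ℝ) + 1) := by
  unfold vv
  rw [div_le_div_iff₀ (by positivity) (by positivity)]
  nlinarith [(Nat.cast_nonneg i : (0 : ℝ) ≤ i)]

lemma vv_nonneg (i : ℕ) : 0 ≤ vv i := by unfold vv; positivity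

lemma sum_vv_defect (M : ℕ) : ∑ i ∈ Finset.range M, (1 / ((i : ℝ) + 1) - vv i) ≤ 4 := by
  refine (Finset.sum_le_sum fun i _ => vv_defect i).trans ?_
  rw [Finset.sum_range_sub' (fun i : ℕ => 4 / ((i : ℝ) + 1)) M]
  have : 0 ≤ 4 / ((M : ℝ) + 1) := by positivity
  simp only [Nat.cast_zero, zero_add, div_one]
  linarith

/-- The smallest value of the density on a cylinder, times `a₁ a₂`, is bounded below by a
product, which decouples the two partial quotients. -/
lemma vv_mul_le (p : ℕ × ℕ) : vv p.1 * vv p.2 ≤ cc p * kk p 1 := by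
  unfold vv kk cc
  push_cast
  rw [div_mul_div_comm, mul_one_div]
  refine div_le_div_of_nonneg_left (by positivity) (by positivity) ?_
  have h1 : (0 : ℝ) ≤ p.1 := Nat.cast_nonneg _
  have h2 : (0 : ℝ) ≤ p.2 := Nat.cast_nonneg _
  have a1 : ((p.1 : ℝ) + 1) * (p.2 + 1 + 1) + 1 ≤ (p.1 + 3) * (p.2 + 3) := by nlinarith
  have a2 : ((p.1 : ℝ) + 2) * (p.2 + 1 + 1) + 1 ≤ (p.1 + 3) * (p.2 + 3) := by nlinarith
  calc _ ≤ (((p.1 : ℝ) + 3) * (p.2 + 3)) * ((p.1 + 3) * (p.2 + 3)) :=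
        mul_le_mul a1 a2 (by positivity) (by positivity)
    _ = _ := by ring

/-- Replacing the cylinder measures by `1 / ((a b)² log 2)` costs only a multiple of `log M`, because each
factor has a summable defect. -/
lemma m1_lower (M : ℕ) : DD M - 8 * (1 + Real.log M) ≤ m1 M * Real.log 2 := by
  have hl := log_two_pos
  have h1 : ∀ p ∈ PM M, 1 / (cc p : ℝ) -
      ((1 / ((p.1 : ℝ) + 1) - vv p.1) * (1 / ((p.2 : ℝ) + 1)) +
        (1 / ((p.1 : ℝ) + 1)) * (1 / ((p.2 : ℝ) + 1) - vv p.2)) ≤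
      (cc p : ℝ) * cm p * Real.log 2 := by
    intro p _
    have h2 := le_cm p
    rw [div_le_iff₀ hl] at h2
    have h3 := mul_le_mul_of_nonneg_left h2 (cc_pos p).le
    have h4 := vv_mul_le p
    have h5 : 1 / (cc p : ℝ) = 1 / ((p.1 : ℝ) + 1) * (1 / ((p.2 : ℝ) + 1)) := by
      unfold cc; push_cast; rw [one_div_mul_one_div]
    rw [h5]
    have a := vv_le p.1
    have b := vv_le p.2
    nlinarith [mul_nonneg (sub_nonneg.2 a) (sub_nonneg.2 b)]
  have h2 := Finset.sum_le_sum h1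
  rw [Finset.sum_sub_distrib, ← Finset.sum_mul] at h2
  have h3 : ∑ p ∈ PM M, ((1 / ((p.1 : ℝ) + 1) - vv p.1) * (1 / ((p.2 : ℝ) + 1)) +
        (1 / ((p.1 : ℝ) + 1)) * (1 / ((p.2 : ℝ) + 1) - vv p.2)) ≤ 8 * (1 + Real.log M) := by
    calc _ ≤ ∑ p ∈ Finset.range M ×ˢ Finset.range M,
        ((1 / ((p.1 : ℝ) + 1) - vv p.1) * (1 / ((p.2 : ℝ) + 1)) +
        (1 / ((p.1 : ℝ) + 1)) * (1 / ((p.2 : ℝ) + 1) - vv p.2)) := by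
          refine Finset.sum_le_sum_of_subset_of_nonneg (Finset.filter_subset _ _) fun p _ _ => ?_
          have a := sub_nonneg.2 (vv_le p.1)
          have b := sub_nonneg.2 (vv_le p.2)
          positivity
      _ = 2 * ((∑ i ∈ Finset.range M, (1 / ((i : ℝ) + 1) - vv i)) * harmonic M) := by
          rw [Finset.sum_add_distrib, harmonic_cast, Finset.sum_product, Finset.sum_product]
          dsimp only
          rw [← Finset.sum_mul_sum, ← Finset.sum_mul_sum]
          ring
      _ ≤ 2 * (4 * (1 + Real.log M)) := by
          have := harmonic_le_one_add_log M
          have := sum_vv_defect M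
          have h0 : (0 : ℝ) ≤ harmonic M := by
            rw [harmonic_cast]; exact Finset.sum_nonneg fun i _ => by positivity
          gcongr
      _ = _ := by ring
  have e : m1 M * Real.log 2 = (∑ p ∈ PM M, (cc p : ℝ) * cm p) * Real.log 2 := rfl
  rw [e]
  unfold DD
  linarith

/-- Asymptotics of the first truncated moment. -/
lemma m1_asymp {M : ℕ} (hM : 0 < M) :
    |m1 M * Real.log 2 - Real.log M ^ 2 / 2| ≤ 9 * (1 + Real.log M) := by
  have h0 : 0 ≤ Real.log M := Real.log_natCast_nonneg M
  rw [abs_le]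
  constructor
  · linarith [m1_lower M, DD_lower hM]
  · linarith [m1_upper M, DD_upper hM]

/-! ### Quantitative weak law -/

lemma S_eq_Y {M N : ℕ} {x : ℝ}
    (h : ∀ i < N, pq 1 (gaussMap^[i] x) * pq 2 (gaussMap^[i] x) ≤ M) :
    (S N x : ℝ) = Y M N x := by
  unfold S Y
  rw [Finset.range_eq_Ico, Finset.sum_Ico_eq_sum_range, ← Finset.Ico_add_one_right_eq_Icc,
    Finset.sum_Ico_eq_sum_range]
  push_cast
  refine Finset.sum_congr (by simp) fun i hi => ?_
  have hi : i < N := by simpa using hi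
  have h1 : pq (1 + i) x = pq 1 (gaussMap^[i] x) := by
    unfold pq
    simp
  have h2 : pq (1 + i + 1) x = pq 2 (gaussMap^[i] x) := by
    unfold pq
    rw [← Function.iterate_add_apply]
    congr 4
  rw [zero_add, Xt, if_pos (h i hi), h1, h2]
  push_cast
  rfl

/-- Truncation, union bound over the exceedances, and Chebyshev's inequality. -/
lemma deviation_bound {M : ℕ} (hM : 0 < M) (N : ℕ) {c : ℝ} (hc : 0 < c) :
    gaussMeasure {x | c ≤ |(S N x : ℝ) - N * m1 M|} ≤
      ENNReal.ofReal (N * (2 * (2 + Real.log M) / M) + 3 * KK M * N / c ^ 2) := by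
  have h0 : 0 ≤ Real.log M := Real.log_natCast_nonneg M
  have hK := KK_nonneg M
  set B : Set ℝ := {x | M < pq 1 x * pq 2 x} with hB
  have hBm : MeasurableSet B :=
    measurableSet_lt measurable_const ((measurable_pq 1).mul (measurable_pq 2))
  have hsub : {x | c ≤ |(S N x : ℝ) - N * m1 M|} ⊆
      (⋃ i ∈ Finset.range N, gaussMap^[i] ⁻¹' B) ∪ {x | c ≤ |Y M N x - N * m1 M|} := by
    intro x hx
    by_cases h : ∃ i ∈ Finset.range N, gaussMap^[i] x ∈ B
    · left
      obtain ⟨i, hi, hxi⟩ := h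
      exact mem_biUnion (Finset.mem_coe.2 hi) hxi
    · right
      push Not at h
      have := S_eq_Y (M := M) (N := N) (x := x) fun i hi =>
        not_lt.1 (h i (Finset.mem_range.2 hi))
      rw [mem_ofPred_eq, ← this]
      exact hx
  have hi : ∀ i ∈ Finset.range N, gaussMeasure (gaussMap^[i] ⁻¹' B) ≤
      ENNReal.ofReal (2 * (2 + Real.log M) / M) := fun i _ => by
    rw [(measurePreserving_iterate i).measure_preimage hBm.nullMeasurableSet]
    exact tail_bound hM
  calc _ ≤ _ := measure_mono hsub
    _ ≤ _ := measure_union_le _ _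
    _ ≤ ENNReal.ofReal (N * (2 * (2 + Real.log M) / M)) +
        ENNReal.ofReal (3 * KK M * N / c ^ 2) := by
      refine add_le_add ?_ (chebyshev M N hc)
      refine (measure_biUnion_finset_le _ _).trans ((Finset.sum_le_sum hi).trans (le_of_eq ?_))
      rw [Finset.sum_const, Finset.card_range, nsmul_eq_mul, ENNReal.ofReal_mul (by positivity),
        ENNReal.ofReal_natCast]
    _ = _ := (ENNReal.ofReal_add (by positivity) (by positivity)).symm

/-- The conditions on `ℓ = log N` under which all the estimates below hold. -/
lemma eventually_large {η : ℝ} (hη : 0 < η) : ∀ᶠ N : ℕ in atTop,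
    1 ≤ Real.log N ∧ 2 * Real.log (2 * Real.log N) ≤ Real.log N ∧
      27 + 3 * Real.log (2 * Real.log N) ≤ η * Real.log N := by
  have hl : Tendsto (fun N : ℕ => Real.log N) atTop atTop :=
    Real.tendsto_log_atTop.comp tendsto_natCast_atTop_atTop
  have ho : ∀ κ : ℝ, 0 < κ → ∀ᶠ y : ℝ in atTop, Real.log y ≤ κ * y := fun κ hκ => by
    have := Real.isLittleO_log_id_atTop.bound hκ
    filter_upwards [this, eventually_ge_atTop 1] with y hy h1
    rw [Real.norm_of_nonneg (Real.log_nonneg h1), id, Real.norm_of_nonneg (by linarith)] at hy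
    exact hy
  have h2 : Tendsto (fun N : ℕ => 2 * Real.log N) atTop atTop :=
    hl.const_mul_atTop (by norm_num)
  filter_upwards [hl.eventually_ge_atTop 1, hl.eventually_ge_atTop (54 / η),
    h2.eventually (ho (1 / 4) (by norm_num)), h2.eventually (ho (η / 12) (by positivity))]
    with N a b c d
  rw [div_le_iff₀ hη] at b
  exact ⟨a, by linarith, by linarith⟩

set_option maxHeartbeats 600000 in
theorem weak_law_quantitative (ε : ℝ) (hε : 0 < ε) :
    ∃ C : ℝ, 0 < C ∧ ∀ᶠ N : ℕ in atTop,
      gaussMeasure {x : ℝ | x ∈ Set.Ioo (0:ℝ) 1 ∧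
          ε < |(S N x : ℝ) / ((N : ℝ) * Real.log N ^ 2) - 1 / (2 * Real.log 2)|} ≤
        ENNReal.ofReal (C / (ε * Real.log N)) := by
  have hl2 := log_two_pos
  have hl2' : 1 / 2 ≤ Real.log 2 := by linarith [Real.log_two_gt_d9]
  refine ⟨8 * ε + 113472 / ε, by positivity, ?_⟩
  filter_upwards [eventually_large (η := ε * Real.log 2 / 2) (by positivity),
    eventually_gt_atTop 0] with N ⟨hℓ, hA, hB⟩ hN
  have hN' : (0 : ℝ) < N := by exact_mod_cast hN
  set ℓ := Real.log N with hℓdef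
  set lg := Real.log (2 * ℓ) with hlg
  set k := ⌈ℓ⌉₊ with hk
  have hk1 : ℓ ≤ k := Nat.le_ceil ℓ
  have hk2 : (k : ℝ) ≤ 2 * ℓ := by
    have := Nat.ceil_lt_add_one (a := ℓ) (by linarith)
    linarith
  have hkpos : (0 : ℝ) < k := by linarith
  have hℓN : ℓ ≤ N := (Real.log_le_sub_one_of_pos hN').trans (by linarith)
  -- The truncation level, comparable to `N log² N`.
  set M := N * k ^ 2 with hMdef
  have hM : 0 < M := Nat.mul_pos hN (pow_pos (by exact_mod_cast hkpos) 2)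
  have hMc : (M : ℝ) = N * (k : ℝ) ^ 2 := by rw [hMdef]; push_cast; ring
  have hM1 : N * ℓ ^ 2 ≤ (M : ℝ) := by rw [hMc]; gcongr
  have hM2 : (M : ℝ) ≤ 4 * (N * ℓ ^ 2) := by
    rw [hMc]
    calc (N : ℝ) * (k : ℝ) ^ 2 ≤ N * (2 * ℓ) ^ 2 := by gcongr
      _ = _ := by ring
  have hL : Real.log M = ℓ + 2 * Real.log k := by
    rw [hMc, Real.log_mul (by positivity) (by positivity), Real.log_pow]
    push_cast
    rfl
  have hlk0 : 0 ≤ Real.log k := Real.log_natCast_nonneg k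
  have hlk : Real.log k ≤ lg := Real.log_le_log hkpos hk2
  have as := m1_asymp hM
  have dv := deviation_bound hM N (c := N * ε * ℓ ^ 2 / 2) (by positivity)
  have u1 := m1_upper M
  have u2 := m2_upper (M := M)
  have u3 := DD_upper hM
  set L := Real.log M with hLdef
  have hL1 : ℓ ≤ L := by linarith
  have hL2 : L ≤ 2 * ℓ := by linarith
  -- The centering `N m1 M` differs from `N log² N / (2 log 2)` by at most half the allowed error.
  have hm1 : |m1 M - ℓ ^ 2 / (2 * Real.log 2)| ≤ ε * ℓ ^ 2 / 2 := by
    have hsq : L ^ 2 - ℓ ^ 2 ≤ 6 * (ℓ * lg) := by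
      have e : L ^ 2 - ℓ ^ 2 = (L - ℓ) * (L + ℓ) := by ring
      rw [e]
      calc (L - ℓ) * (L + ℓ) ≤ (2 * lg) * (3 * ℓ) :=
            mul_le_mul (by linarith) (by linarith) (by linarith) (by linarith)
        _ = _ := by ring
    have hsq0 : 0 ≤ L ^ 2 - ℓ ^ 2 := by nlinarith
    have hB' := mul_le_mul_of_nonneg_left hB (by linarith : 0 ≤ ℓ)
    have e : m1 M - ℓ ^ 2 / (2 * Real.log 2) =
        (m1 M * Real.log 2 - ℓ ^ 2 / 2) / Real.log 2 := by
      field_simp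
    rw [e, abs_div, abs_of_pos hl2, div_le_iff₀ hl2]
    rw [abs_le] at as ⊢
    constructor <;> nlinarith
  have hm1u : m1 M ≤ 14 * ℓ ^ 2 := by
    have : m1 M * (1 / 2) ≤ m1 M * Real.log 2 := mul_le_mul_of_nonneg_left hl2' (m1_nonneg M)
    nlinarith
  have hm2u : m2 M ≤ 24 * (N * ℓ ^ 3) := by
    have h1 : m2 M * (1 / 2) ≤ m2 M * Real.log 2 := mul_le_mul_of_nonneg_left hl2' (m2_nonneg M)
    have h2 : (M : ℝ) * (1 + L) ≤ 4 * (N * ℓ ^ 2) * (3 * ℓ) :=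
      mul_le_mul hM2 (by linarith) (by linarith) (by positivity)
    have h3 : 4 * (N * ℓ ^ 2) * (3 * ℓ) = 12 * (N * ℓ ^ 3) := by ring
    linarith
  have hKK : KK M ≤ 9456 * (N * ℓ ^ 3) := by
    have h1 : m1 M ^ 2 ≤ (14 * ℓ ^ 2) ^ 2 := pow_le_pow_left₀ (m1_nonneg M) hm1u 2
    have h2 : ℓ * ℓ ^ 3 ≤ N * ℓ ^ 3 := by gcongr
    have h3 : (14 * ℓ ^ 2) ^ 2 = 196 * (ℓ * ℓ ^ 3) := by ring
    unfold KK
    linarith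
  have hsub : {x : ℝ | x ∈ Set.Ioo (0:ℝ) 1 ∧
      ε < |(S N x : ℝ) / ((N : ℝ) * ℓ ^ 2) - 1 / (2 * Real.log 2)|} ⊆
      {x | N * ε * ℓ ^ 2 / 2 ≤ |(S N x : ℝ) - N * m1 M|} := by
    rintro x ⟨_, hx⟩
    have hp : (0 : ℝ) < N * ℓ ^ 2 := by positivity
    have e : (S N x : ℝ) / ((N : ℝ) * ℓ ^ 2) - 1 / (2 * Real.log 2) =
        (((S N x : ℝ) - N * m1 M) + N * (m1 M - ℓ ^ 2 / (2 * Real.log 2))) / (N * ℓ ^ 2) := by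
      field_simp
      ring
    rw [e, abs_div, abs_of_pos hp, lt_div_iff₀ hp] at hx
    have h1 := abs_add_le ((S N x : ℝ) - N * m1 M) (N * (m1 M - ℓ ^ 2 / (2 * Real.log 2)))
    rw [abs_mul, abs_of_pos hN'] at h1
    have h2 := mul_le_mul_of_nonneg_left hm1 hN'.le
    rw [mem_ofPred_eq]
    linarith
  refine (measure_mono hsub).trans (dv.trans (ENNReal.ofReal_le_ofReal ?_))
  have t1 : N * (2 * (2 + L) / M) ≤ 8 / ℓ := by
    calc N * (2 * (2 + L) / M) ≤ N * (2 * (4 * ℓ) / (N * ℓ ^ 2)) := by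
          gcongr
          linarith
      _ = 8 / ℓ := by field_simp; norm_num
  have t2 : 3 * KK M * N / (N * ε * ℓ ^ 2 / 2) ^ 2 ≤ 113472 / (ε ^ 2 * ℓ) := by
    calc 3 * KK M * N / (N * ε * ℓ ^ 2 / 2) ^ 2
        ≤ 3 * (9456 * (N * ℓ ^ 3)) * N / (N * ε * ℓ ^ 2 / 2) ^ 2 := by gcongr
      _ = _ := by field_simp; norm_num
  calc _ ≤ 8 / ℓ + 113472 / (ε ^ 2 * ℓ) := add_le_add t1 t2
    _ = _ := by field_simp
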